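/- Suppose Φ : 𝔻ⁿ → 𝔻ⁿ is holomorphic and C¹-smooth on the closed polydisc, and satisfies the rank condition (†): for every nonempty subset I ⊆ {1,…,n} of cardinality q and every ζ ∈ 𝕋ⁿ with Φ_I(ζ) ∈ 𝕋^q, the complex derivative d_ζΦ_I (the q×n Jacobian matrix of the components Φ_i, i ∈ I, at ζ) has rank q. Then the composition operator C_Φ is bounded on the Hardy space H²(𝔻ⁿ). -/

import Mathlib

open MeasureTheory Metric Set ENNReal

noncomputable section

/-- The open unit polydisc in `ℂⁿ`. -/
def polydisc (n : ℕ) : Set (Fin n → ℂ) := {z | ∀ j, ‖z j‖ < 1}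

/-- The closed unit polydisc in `ℂⁿ`. -/
def closedPolydisc (n : ℕ) : Set (Fin n → ℂ) := {z | ∀ j, ‖z j‖ ≤ 1}

/-- The distinguished boundary (torus) of the polydisc. -/
def torus (n : ℕ) : Set (Fin n → ℂ) := {z | ∀ j, ‖z j‖ = 1}

/-- The `(i,j)` entry `∂Φ_i/∂z_j(ζ)` of the complex Jacobian matrix of `Φ` at `ζ`
(computed via the derivative of the extension to the closed polydisc). -/
def jacEntry (n : ℕ) (Φ : (Fin n → ℂ) → (Fin n → ℂ)) (ζ : Fin n → ℂ) (i j : Fin n) : ℂ :=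
  fderivWithin ℝ Φ (closedPolydisc n) ζ (Pi.single j 1) i

/-- The rank condition (†): for every nonempty `I ⊆ {1,…,n}` of cardinality `q` and
every `ζ ∈ 𝕋ⁿ` with `Φ_I(ζ) ∈ 𝕋^q`, the Jacobian `d_ζΦ_I` has rank `q`. -/
def rankCond (n : ℕ) (Φ : (Fin n → ℂ) → (Fin n → ℂ)) : Prop :=
  ∀ I : Finset (Fin n), I.Nonempty → ∀ ζ ∈ torus n, (∀ i ∈ I, ‖Φ ζ i‖ = 1) →
    Matrix.rank (Matrix.of fun (i : I) (j : Fin n) => jacEntry n Φ ζ i j) = I.card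

/-- The square of the Hardy space norm, `sup_{0<r<1} ∫_{𝕋ⁿ} |g(rξ)|² dσ(ξ)`. -/
def hardySq (n : ℕ) (g : (Fin n → ℂ) → ℂ) : ℝ≥0∞ :=
  ⨆ r ∈ Set.Ioo (0:ℝ) 1,
    ∫⁻ θ in Set.univ.pi (fun _ : Fin n => Set.Icc (0:ℝ) 1),
      ENNReal.ofReal
        (‖g (fun j => (r : ℂ) * Complex.exp (2 * Real.pi * Complex.I * (θ j : ℂ)))‖ ^ 2)

/-- The composition operator `C_Φ` is bounded on the Hardy space `H²(𝔻ⁿ)`. -/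
def bddHardy (n : ℕ) (Φ : (Fin n → ℂ) → (Fin n → ℂ)) : Prop :=
  ∃ C > (0:ℝ), ∀ f : (Fin n → ℂ) → ℂ, DifferentiableOn ℂ f (polydisc n) →
    hardySq n (fun z => f (Φ z)) ≤ ENNReal.ofReal C * hardySq n f


theorem mulm {X : Type*} [MeasurableSpace X] {f g : X → ℝ≥0∞} (hf : Measurable f)
    (hg : Measurable g) : Measurable (fun x => f x * g x) := hf.mul hg

theorem lcs {X : Type*} [MeasurableSpace X] (μ : Measure X) {f g : X → ℝ≥0∞}
    (hf : Measurable f) (hg : Measurable g) :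
    (∫⁻ x, f x * g x ∂μ) ^ 2 ≤ (∫⁻ x, f x ^ 2 ∂μ) * ∫⁻ x, g x ^ 2 ∂μ := by
  have h := ENNReal.lintegral_mul_le_Lp_mul_Lq μ (p := 2) (q := 2)
    ⟨by norm_num, by norm_num, by norm_num⟩ hf.aemeasurable hg.aemeasurable
  have h2 := pow_le_pow_left₀ (zero_le) h 2
  refine h2.trans (le_of_eq ?_)
  rw [mul_pow, ← ENNReal.rpow_natCast, ← ENNReal.rpow_mul, ← ENNReal.rpow_natCast, ← ENNReal.rpow_mul]
  norm_num

section lin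
variable {X : Type*} [MeasurableSpace X] (μ : Measure X) [IsFiniteMeasure μ]
  (k : X → X → ℝ≥0∞)

/-- One step of the bootstrapping. -/
theorem boot (hk : Measurable (Function.uncurry k)) (D A : ℝ≥0∞)
    (hA : A ≠ ⊤)
    (hkk : ∀ x x', ∫⁻ y, k x y * k x' y ∂μ ≤ D * (k x x' + k x' x))
    (hb : ∀ g : X → ℝ≥0∞, Measurable g → ∫⁻ x, g x ^ 2 ∂μ ≠ ⊤ →
      ∫⁻ x, (∫⁻ y, k x y * g y ∂μ) ^ 2 ∂μ ≤ A ^ 2 * ∫⁻ x, g x ^ 2 ∂μ)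
    (g : X → ℝ≥0∞) (hg : Measurable g) (hg2 : ∫⁻ x, g x ^ 2 ∂μ ≠ ⊤) :
    ∫⁻ x, (∫⁻ y, k x y * g y ∂μ) ^ 2 ∂μ ≤ (2 * D * A) * ∫⁻ x, g x ^ 2 ∂μ := by
  have hT : ∀ g : X → ℝ≥0∞, Measurable g → Measurable (fun x => ∫⁻ y, k x y * g y ∂μ) := by
    intro g hg
    exact Measurable.lintegral_prod_right' (f := fun p : X × X => k p.1 p.2 * g p.2)
      (hk.mul (hg.comp measurable_snd))
  set h : X → ℝ≥0∞ := fun x => ∫⁻ y, k x y * g y ∂μ with hh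
  have hhm : Measurable h := hT g hg
  set N := ∫⁻ x, h x ^ 2 ∂μ with hN
  have hNtop : N ≠ ⊤ := ne_top_of_le_ne_top (by finiteness) (hb g hg hg2)
  have hkm : ∀ x, Measurable (k x) := fun x => hk.comp measurable_prodMk_left
  have hkm' : ∀ y, Measurable (fun x => k x y) := fun y => hk.comp measurable_prodMk_right
  set S : X → ℝ≥0∞ := fun y => ∫⁻ x, h x * k x y ∂μ with hS
  have hSm : Measurable S := by
    exact Measurable.lintegral_prod_left' (f := fun p : X × X => h p.1 * k p.1 p.2)
      ((hhm.comp measurable_fst).mul hk)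
  have e1 : N = ∫⁻ y, S y * g y ∂μ := by
    have : ∀ x, h x ^ 2 = ∫⁻ y, h x * k x y * g y ∂μ := by
      intro x
      simp_rw [mul_assoc]
      rw [lintegral_const_mul _ (mulm (hkm x) hg), sq]
    rw [hN]; simp_rw [this]
    rw [lintegral_lintegral_swap]
    · refine lintegral_congr fun y => ?_
      rw [lintegral_mul_const _ (mulm hhm (hkm' y))]
    · exact (((hhm.comp measurable_fst).mul hk).mul (hg.comp measurable_snd)).aemeasurable
  set Q := ∫⁻ x, h x * (∫⁻ y, k x y * h y ∂μ) ∂μ with hQ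
  have hQ' : Q = ∫⁻ x, ∫⁻ x', h x * h x' * k x x' ∂μ ∂μ := by
    refine lintegral_congr fun x => ?_
    rw [← lintegral_const_mul _ (mulm (hkm x) hhm)]
    refine lintegral_congr fun y => ?_
    ring
  have hQ'' : Q = ∫⁻ x, ∫⁻ x', h x * h x' * k x' x ∂μ ∂μ := by
    rw [hQ', lintegral_lintegral_swap]
    · refine lintegral_congr fun x => lintegral_congr fun y => ?_
      ring
    · exact (((hhm.comp measurable_fst).mul (hhm.comp measurable_snd)).mul hk).aemeasurable
  have e2 : ∫⁻ y, S y ^ 2 ∂μ ≤ 2 * D * Q := by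
    have : ∀ y, S y ^ 2 = ∫⁻ x, ∫⁻ x', h x * h x' * (k x y * k x' y) ∂μ ∂μ := by
      intro y
      have : ∀ x, ∫⁻ x', h x * h x' * (k x y * k x' y) ∂μ = h x * k x y * S y := by
        intro x
        rw [hS, ← lintegral_const_mul _ (mulm hhm (hkm' y))]
        refine lintegral_congr fun x' => ?_
        ring
      simp_rw [this]
      rw [lintegral_mul_const _ (mulm hhm (hkm' y)), sq]
    simp_rw [this]
    have m3 : Measurable (fun p : (X × X) × X => h p.1.1 * h p.1.2 * (k p.1.1 p.2 * k p.1.2 p.2)) := by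
      have a1 : Measurable (fun p : (X × X) × X => k p.1.1 p.2) :=
        hk.comp ((measurable_fst.comp measurable_fst).prodMk measurable_snd)
      have a2 : Measurable (fun p : (X × X) × X => k p.1.2 p.2) :=
        hk.comp ((measurable_snd.comp measurable_fst).prodMk measurable_snd)
      have a3 : Measurable (fun p : (X × X) × X => h p.1.1) :=
        hhm.comp ((measurable_fst.comp measurable_fst))
      have a4 : Measurable (fun p : (X × X) × X => h p.1.2) :=
        hhm.comp ((measurable_snd.comp measurable_fst))
      exact (a3.mul a4).mul (a1.mul a2)
    rw [lintegral_lintegral_swap]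
    · have : ∀ x, ∫⁻ y, ∫⁻ x', h x * h x' * (k x y * k x' y) ∂μ ∂μ
          ≤ ∫⁻ x', h x * h x' * (D * (k x x' + k x' x)) ∂μ := by
        intro x
        rw [lintegral_lintegral_swap]
        · refine lintegral_mono fun x' => ?_
          rw [lintegral_const_mul _ (mulm (hkm x) (hkm x'))]
          gcongr
          exact hkk x x'
        · have : Measurable (fun p : X × X => (((x, p.2), p.1) : (X × X) × X)) := by fun_prop
          exact (m3.comp this).aemeasurable
      refine (lintegral_mono this).trans (le_of_eq ?_)
      have : ∀ x x', h x * h x' * (D * (k x x' + k x' x)) =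
          D * (h x * h x' * k x x') + D * (h x * h x' * k x' x) := by intros; ring
      simp_rw [this]
      have b1 : Measurable (fun p : X × X => h p.1 * h p.2 * k p.1 p.2) :=
        ((hhm.comp measurable_fst).mul (hhm.comp measurable_snd)).mul hk
      have b2 : Measurable (fun p : X × X => h p.1 * h p.2 * k p.2 p.1) :=
        ((hhm.comp measurable_fst).mul (hhm.comp measurable_snd)).mul (hk.comp measurable_swap)
      have b1x : ∀ x, Measurable (fun x' => h x * h x' * k x x') := fun x =>
        b1.comp measurable_prodMk_left
      have b2x : ∀ x, Measurable (fun x' => h x * h x' * k x' x) := fun x =>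
        b2.comp measurable_prodMk_left
      have : ∀ x, ∫⁻ x', D * (h x * h x' * k x x') + D * (h x * h x' * k x' x) ∂μ =
          D * (∫⁻ x', h x * h x' * k x x' ∂μ) + D * ∫⁻ x', h x * h x' * k x' x ∂μ := by
        intro x
        rw [lintegral_add_left ((b1x x).const_mul D), lintegral_const_mul _ (b1x x),
          lintegral_const_mul _ (b2x x)]
      simp_rw [this]
      rw [lintegral_add_left (b1.lintegral_prod_right'.const_mul D),
        lintegral_const_mul _ b1.lintegral_prod_right',
        lintegral_const_mul _ b2.lintegral_prod_right', ← hQ', ← hQ'']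
      ring
    · have : Measurable (fun p : (X × X) × X => (((p.1.2, p.2), p.1.1) : (X × X) × X)) := by fun_prop
      exact (Measurable.lintegral_prod_right' (m3.comp this)).aemeasurable
  have e3 : Q ≤ A * N := by
    have := lcs μ hhm (hT h hhm)
    have h2 : Q ^ 2 ≤ (A * N) ^ 2 := by
      refine this.trans ?_
      refine (mul_le_mul_right (hb h hhm hNtop) _).trans (le_of_eq ?_)
      rw [← hN]; ring
    exact (ENNReal.pow_le_pow_left_iff two_ne_zero).1 h2
  have e4 : N ^ 2 ≤ (2 * D * (A * N)) * ∫⁻ x, g x ^ 2 ∂μ := by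
    calc N ^ 2 = (∫⁻ y, S y * g y ∂μ) ^ 2 := by rw [← e1]
      _ ≤ _ := lcs μ hSm hg
      _ ≤ _ := by gcongr; exact e2.trans (by gcongr)
  by_cases hN0 : N = 0
  · rw [hN0]; exact zero_le
  · have : N * N ≤ N * (2 * D * A * ∫⁻ x, g x ^ 2 ∂μ) := by
      rw [← sq]; exact e4.trans (le_of_eq (by ring))
    exact (ENNReal.mul_le_mul_iff_right hN0 hNtop).1 this

theorem lin_bound (hk : Measurable (Function.uncurry k)) (D b : ℝ≥0∞) (hb : b ≠ ⊤)
    (hkb : ∀ x y, k x y ≤ b)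
    (hkk : ∀ x x', ∫⁻ y, k x y * k x' y ∂μ ≤ D * (k x x' + k x' x))
    (g : X → ℝ≥0∞) (hg : Measurable g) (hg2 : ∫⁻ x, g x ^ 2 ∂μ ≠ ⊤) :
    ∫⁻ x, (∫⁻ y, k x y * g y ∂μ) ^ 2 ∂μ ≤ (2 * D) ^ 2 * ∫⁻ x, g x ^ 2 ∂μ := by
  set S : Set ℝ≥0∞ := {A | ∀ g : X → ℝ≥0∞, Measurable g → ∫⁻ x, g x ^ 2 ∂μ ≠ ⊤ →
      ∫⁻ x, (∫⁻ y, k x y * g y ∂μ) ^ 2 ∂μ ≤ A * ∫⁻ x, g x ^ 2 ∂μ} with hS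
  have h0 : (b * μ univ) ^ 2 ∈ S := by
    intro g hg hg2
    have : ∀ x, (∫⁻ y, k x y * g y ∂μ) ^ 2 ≤ b ^ 2 * (μ univ * ∫⁻ x, g x ^ 2 ∂μ) := by
      intro x
      have h1 : ∫⁻ y, k x y * g y ∂μ ≤ b * ∫⁻ y, 1 * g y ∂μ := by
        rw [← lintegral_const_mul _ (by simpa using hg)]
        refine lintegral_mono fun y => ?_
        simp only [one_mul]
        gcongr; exact hkb x y
      have h2 := lcs μ (measurable_const (a := (1 : ℝ≥0∞))) hg
      calc _ ≤ (b * ∫⁻ y, 1 * g y ∂μ) ^ 2 := by gcongr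
        _ = b ^ 2 * (∫⁻ y, 1 * g y ∂μ) ^ 2 := by ring
        _ ≤ _ := by gcongr; simpa using h2
    refine (lintegral_mono this).trans (le_of_eq ?_)
    rw [lintegral_const]; ring
  set A := sInf S with hA
  have hAtop : A ≠ ⊤ := ne_top_of_le_ne_top (by finiteness) (sInf_le h0)
  have hAS : A ∈ S := by
    intro g hg hg2
    by_cases hz : ∫⁻ x, g x ^ 2 ∂μ = 0
    · have := h0 g hg hg2
      rw [hz] at this ⊢; simpa using this
    · rw [← ENNReal.div_le_iff hz hg2]
      refine le_sInf fun B hB => ?_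
      rw [ENNReal.div_le_iff hz hg2]
      exact hB g hg hg2
  set a := A ^ (1/2 : ℝ) with ha
  have haA : a ^ 2 = A := by
    rw [ha, ← ENNReal.rpow_natCast, ← ENNReal.rpow_mul]; norm_num
  have hat : a ≠ ⊤ := by
    intro h; rw [h] at haA; simp at haA; exact hAtop haA.symm
  have hb' : 2 * D * a ∈ S := by
    intro g hg hg2
    exact boot μ k hk D a hat hkk (fun g hg hg2 => by rw [haA]; exact hAS g hg hg2) g hg hg2
  have h3 : A ≤ 2 * D * a := sInf_le hb'
  have h4 : a ≤ 2 * D := by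
    by_cases h : a = 0
    · rw [h]; exact zero_le
    · rw [← haA, sq, mul_comm (2 * D)] at h3
      exact (ENNReal.mul_le_mul_iff_right h hat).1 h3
  refine (hAS g hg hg2).trans ?_
  rw [← haA]; gcongr

end lin

theorem max_bound {X : Type*} [MeasurableSpace X] (μ : Measure X) [IsFiniteMeasure μ]
    (p : ℕ → X → X → ℝ≥0∞) (hp : ∀ k, Measurable (Function.uncurry (p k)))
    (D : ℝ≥0∞) (hD : D ≠ 0)
    (hpb : ∀ k, ∃ b, b ≠ ⊤ ∧ ∀ x y, p k x y ≤ b)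
    (hpp : ∀ k l x z, ∫⁻ y, p k x y * p l z y ∂μ ≤ D * (p k x z + p l z x))
    (g : X → ℝ≥0∞) (hg : Measurable g) :
    ∫⁻ x, (⨆ k, ∫⁻ y, p k x y * g y ∂μ) ^ 2 ∂μ ≤ (2 * D) ^ 2 * ∫⁻ x, g x ^ 2 ∂μ := by
  by_cases hg2 : ∫⁻ x, g x ^ 2 ∂μ = ⊤
  · rw [hg2, ENNReal.mul_top (by simpa using hD)]
    exact le_top
  have hTm : ∀ k, Measurable (fun x => ∫⁻ y, p k x y * g y ∂μ) := fun k =>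
    Measurable.lintegral_prod_right' (f := fun q : X × X => p k q.1 q.2 * g q.2)
      ((hp k).mul (hg.comp measurable_snd))
  have hsel : ∀ N : ℕ, ∃ δ : X → ℕ, Measurable δ ∧ (∀ x, δ x ≤ N) ∧ ∀ x, ∀ k ≤ N,
      ∫⁻ y, p k x y * g y ∂μ ≤ ∫⁻ y, p (δ x) x y * g y ∂μ := by
    intro N
    induction N with
    | zero => exact ⟨fun _ => 0, measurable_const, by simp, fun x k hk => by
        obtain rfl : k = 0 := by omega
        exact le_rfl⟩
    | succ N ih =>
      obtain ⟨δ, hδ, hδN, hδm⟩ := ih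
      have hm : Measurable (fun x => ∫⁻ y, p (δ x) x y * g y ∂μ) :=
        (measurable_from_prod_countable_right (f := fun q : ℕ × X => ∫⁻ y, p q.1 q.2 y * g y ∂μ)
          hTm).comp (hδ.prodMk measurable_id)
      classical
      refine ⟨fun x => if (∫⁻ y, p (δ x) x y * g y ∂μ) ≤ ∫⁻ y, p (N+1) x y * g y ∂μ
        then N + 1 else δ x, Measurable.ite (measurableSet_le hm (hTm _)) measurable_const hδ, ?_, ?_⟩
      · intro x
        dsimp only
        split_ifs
        · exact le_rfl
        · exact (hδN x).trans (by omega)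
      · intro x k hk
        dsimp only
        rcases Nat.lt_or_ge N k with h | h
        · obtain rfl : k = N + 1 := by omega
          split_ifs with h'
          · exact le_rfl
          · exact (not_le.1 h').le
        · split_ifs with h'
          · exact (hδm x k h).trans h'
          · exact hδm x k h
  have hN : ∀ N : ℕ, ∫⁻ x, (⨆ k ≤ N, ∫⁻ y, p k x y * g y ∂μ) ^ 2 ∂μ
      ≤ (2 * D) ^ 2 * ∫⁻ x, g x ^ 2 ∂μ := by
    intro N
    obtain ⟨δ, hδ, hδN, hδm⟩ := hsel N
    choose b hbt hb using hpb
    refine (lintegral_mono (g := fun x => (∫⁻ y, p (δ x) x y * g y ∂μ) ^ 2) fun x => ?_).trans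
      (lin_bound μ (fun x y => p (δ x) x y) ?_ D (∑ k ∈ Finset.range (N+1), b k) ?_ ?_ ?_ g hg hg2)
    · refine pow_le_pow_left₀ zero_le (iSup₂_le fun k hk => hδm x k hk) 2
    · exact (measurable_from_prod_countable_right (f := fun q : ℕ × (X × X) => p q.1 q.2.1 q.2.2)
          hp).comp ((hδ.comp measurable_fst).prodMk measurable_id)
    · exact ENNReal.sum_ne_top.2 fun k _ => hbt k
    · intro x y
      refine (hb _ x y).trans (Finset.single_le_sum (f := b) (fun _ _ => zero_le) ?_)
      simp; have := hδN x; omega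
    · intro x x'
      exact hpp _ _ _ _
  have hsup : ∀ x, (⨆ k, ∫⁻ y, p k x y * g y ∂μ) ^ 2
      = ⨆ N : ℕ, (⨆ k ≤ N, ∫⁻ y, p k x y * g y ∂μ) ^ 2 := by
    intro x
    rw [← ENNReal.iSup_pow]
    congr 1
    exact le_antisymm (iSup_le fun k => le_iSup_of_le k (le_iSup₂_of_le k le_rfl le_rfl))
      (iSup_le fun N => iSup₂_le fun k _ => le_iSup (fun k => ∫⁻ y, p k x y * g y ∂μ) k)
  simp_rw [hsup]
  rw [lintegral_iSup]
  · exact iSup_le hN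
  · intro N
    exact (Measurable.iSup fun k => Measurable.iSup fun _ => hTm k).pow_const 2
  · intro N M h x
    dsimp only
    refine pow_le_pow_left₀ zero_le ?_ 2
    exact biSup_mono fun k hk => hk.trans h

/-- The standard embedding of the additive circle in `ℂ`. -/
def eC (x : UnitAddCircle) : ℂ := (AddCircle.toCircle x : ℂ)

theorem eC_norm (x : UnitAddCircle) : ‖eC x‖ = 1 := Circle.norm_coe _

theorem eC_cont : Continuous eC := by
  unfold eC
  exact continuous_subtype_val.comp AddCircle.continuous_toCircle

theorem eC_mk (x : ℝ) : eC (x : UnitAddCircle) = Complex.exp (2 * Real.pi * Complex.I * x) := by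
  unfold eC
  rw [AddCircle.toCircle_apply_mk, Circle.coe_exp]
  congr 1; push_cast; ring

theorem poisson_cont {w : ℂ} (hw : ‖w‖ < 1) :
    Continuous (fun x => poissonKernel 0 w (eC x)) := by
  unfold poissonKernel
  refine Continuous.div (by have := eC_cont; fun_prop) (by have := eC_cont; fun_prop) ?_
  intro x h
  simp only [sub_zero, ne_eq, OfNat.ofNat_ne_zero, not_false_eq_true, pow_eq_zero_iff, norm_eq_zero, sub_eq_zero] at h
  rw [← h, eC_norm] at hw
  exact lt_irrefl _ hw

theorem poisson_nonneg {w : ℂ} (hw : ‖w‖ < 1) (x) : 0 ≤ poissonKernel 0 w (eC x) := by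
  unfold poissonKernel
  simp only [sub_zero, eC_norm]
  have : ‖w‖ ^ 2 ≤ 1 := by nlinarith [norm_nonneg w]
  exact div_nonneg (by linarith) (by positivity)

theorem poisson_int {H : ℂ → ℂ} (hH : DiffContOnCl ℂ H (ball 0 1)) {w : ℂ} (hw : ‖w‖ < 1) :
    H w = ∫ x : UnitAddCircle, poissonKernel 0 w (eC x) • H (eC x) := by
  rw [← hH.circleAverage_poissonKernel_smul (w := w) (by simpa using hw), Real.circleAverage_def]
  rw [← UnitAddCircle.intervalIntegral_preimage 0]
  have := intervalIntegral.integral_comp_mul_left (a := 0) (b := 1)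
    (fun θ : ℝ => (poissonKernel 0 w • H) (circleMap 0 1 θ)) (c := 2 * Real.pi) (by positivity)
  simp only [mul_zero, mul_one] at this
  rw [← this, zero_add]
  refine intervalIntegral.integral_congr fun θ _ => ?_
  simp only [Pi.smul_apply', eC_mk, circleMap]
  have : Complex.exp (2 * Real.pi * Complex.I * θ) = Complex.exp (2 * Real.pi * θ * Complex.I) := by
    congr 1; ring
  simp [this]

theorem poisson_le {H : ℂ → ℂ} (hH : DiffContOnCl ℂ H (ball 0 1)) {w : ℂ} (hw : ‖w‖ < 1) :
    ‖H w‖ₑ ≤ ∫⁻ x : UnitAddCircle, ENNReal.ofReal (poissonKernel 0 w (eC x)) * ‖H (eC x)‖ₑ := by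
  rw [poisson_int hH hw]
  refine (enorm_integral_le_lintegral_enorm _).trans (le_of_eq ?_)
  refine lintegral_congr fun x => ?_
  rw [enorm_smul, Real.enorm_of_nonneg (poisson_nonneg hw x)]

theorem poisson_one {w : ℂ} (hw : ‖w‖ < 1) :
    ∫⁻ x : UnitAddCircle, ENNReal.ofReal (poissonKernel 0 w (eC x)) = 1 := by
  have hi : Integrable (fun x : UnitAddCircle => poissonKernel 0 w (eC x)) :=
    (poisson_cont hw).integrable_of_hasCompactSupport (HasCompactSupport.of_compactSpace _)
  rw [← ofReal_integral_eq_lintegral_ofReal hi (Filter.Eventually.of_forall (poisson_nonneg hw))]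
  have h := poisson_int (H := fun _ => 1) diffContOnCl_const hw
  have : ∫ x : UnitAddCircle, poissonKernel 0 w (eC x) = 1 := by
    have h2 : (1 : ℂ) = ((∫ x : UnitAddCircle, poissonKernel 0 w (eC x) : ℝ) : ℂ) := by
      rw [← integral_complex_ofReal]
      simpa using h
    exact_mod_cast h2.symm
  rw [this]; simp

/-- The comparison kernel. -/
def kern (t : ℝ) (x y : UnitAddCircle) : ℝ := t / (t ^ 2 + ‖eC x - eC y‖ ^ 2)

theorem kern_nonneg {t : ℝ} (ht : 0 < t) (x y) : 0 ≤ kern t x y := by unfold kern; positivity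

theorem kern_symm (t : ℝ) (x y) : kern t x y = kern t y x := by
  unfold kern; rw [norm_sub_rev]

theorem kern_cont {t : ℝ} (ht : 0 < t) : Continuous (fun p : UnitAddCircle × UnitAddCircle => kern t p.1 p.2) := by
  unfold kern
  have := eC_cont
  refine Continuous.div (by fun_prop) (by fun_prop) fun x => by positivity

theorem kern_bdd {t : ℝ} (ht : 0 < t) (x y) : kern t x y ≤ 1 / t := by
  unfold kern
  rw [div_le_div_iff₀ (by positivity) ht]
  nlinarith [sq_nonneg ‖eC x - eC y‖]

theorem kern_le_poisson {t : ℝ} (ht : 0 < t) (ht1 : t ≤ 1) (x y) :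
    kern t x y ≤ 2 * poissonKernel 0 (((1 - t : ℝ) : ℂ) * eC x) (eC y) := by
  have hw : ‖((1 - t : ℝ) : ℂ) * eC x‖ = 1 - t := by
    rw [norm_mul, eC_norm, Complex.norm_real, Real.norm_of_nonneg (by linarith), mul_one]
  unfold kern poissonKernel
  simp only [sub_zero, hw, eC_norm]
  set b := ‖eC y - ((1 - t : ℝ) : ℂ) * eC x‖ with hb
  have h1 : b ≤ ‖eC x - eC y‖ + t := by
    have : eC y - ((1 - t : ℝ) : ℂ) * eC x = -(eC x - eC y) + (t : ℂ) * eC x := by push_cast; ring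
    rw [hb, this]
    refine (norm_add_le _ _).trans ?_
    rw [norm_neg, norm_mul, eC_norm, Complex.norm_real, Real.norm_of_nonneg ht.le, mul_one]
  have h2 : t ≤ b := by
    have := norm_sub_norm_le (eC y) (((1 - t : ℝ) : ℂ) * eC x)
    rw [hw, eC_norm] at this
    linarith
  have hb0 : 0 < b := by linarith
  rw [← mul_div_assoc, div_le_div_iff₀ (by positivity) (by positivity)]
  have h3 : b ^ 2 ≤ 2 * (t ^ 2 + ‖eC x - eC y‖ ^ 2) := by
    nlinarith [sq_nonneg (t - ‖eC x - eC y‖), norm_nonneg (eC x - eC y)]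
  have h4 : t ≤ 1 ^ 2 - (1 - t) ^ 2 := by nlinarith
  calc t * b ^ 2 ≤ t * (2 * (t ^ 2 + ‖eC x - eC y‖ ^ 2)) := by gcongr
    _ = 2 * t * (t ^ 2 + ‖eC x - eC y‖ ^ 2) := by ring
    _ ≤ _ := by gcongr

theorem kern_int {t : ℝ} (ht : 0 < t) (ht1 : t ≤ 1) (x) :
    ∫⁻ y, ENNReal.ofReal (kern t x y) ≤ 2 := by
  have hw : ‖((1 - t : ℝ) : ℂ) * eC x‖ < 1 := by
    rw [norm_mul, eC_norm, Complex.norm_real, Real.norm_of_nonneg (by linarith), mul_one]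
    linarith
  calc _ ≤ ∫⁻ y, 2 * ENNReal.ofReal (poissonKernel 0 (((1 - t : ℝ) : ℂ) * eC x) (eC y)) := by
        refine lintegral_mono fun y => ?_
        refine (ENNReal.ofReal_le_ofReal (kern_le_poisson ht ht1 x y)).trans ?_
        rw [ENNReal.ofReal_mul (by norm_num)]; simp
    _ = 2 := by
        rw [lintegral_const_mul _ (poisson_cont hw).measurable.ennreal_ofReal, poisson_one hw, mul_one]

theorem kern_prod {s t : ℝ} (hs : 0 < s) (ht : 0 < t) (x z y) :
    kern s x y * kern t z y ≤ 4 * (kern s x z * kern t z y + kern t z x * kern s x y) := by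
  have key : ∀ {s : ℝ}, 0 < s → ∀ a b : ℝ, 0 ≤ b → 0 ≤ a → b ≤ 2 * a → s / (s ^ 2 + a ^ 2) ≤ 4 * (s / (s ^ 2 + b ^ 2)) := by
    intro s hs a b hb ha h
    rw [← mul_div_assoc, div_le_div_iff₀ (by positivity) (by positivity)]
    have : s ^ 2 + b ^ 2 ≤ 4 * (s ^ 2 + a ^ 2) := by nlinarith [sq_nonneg s]
    nlinarith
  have h0 : ‖eC x - eC z‖ ≤ ‖eC x - eC y‖ + ‖eC z - eC y‖ := by
    rw [norm_sub_rev (eC z)]; exact norm_sub_le_norm_sub_add_norm_sub _ _ _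
  have n1 := kern_nonneg hs x y
  have n2 := kern_nonneg ht z y
  have n3 := kern_nonneg hs x z
  have n4 := kern_nonneg ht z x
  rcases le_total ‖eC x - eC y‖ ‖eC z - eC y‖ with h | h
  · have : kern t z y ≤ 4 * kern t z x := key ht _ _ (norm_nonneg _) (norm_nonneg _)
      (by rw [norm_sub_rev (eC z) (eC x)]; linarith)
    nlinarith [mul_nonneg n3 n2]
  · have : kern s x y ≤ 4 * kern s x z := key hs _ _ (norm_nonneg _) (norm_nonneg _)
      (by linarith)
    nlinarith [mul_nonneg n4 n1]

theorem poisson_le_kern {s : ℝ} (hs : 0 ≤ s) (hs1 : s < 1) (x) :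
    ∃ k : ℕ, ∀ y, poissonKernel 0 ((s : ℂ) * eC x) (eC y) ≤ 40 * kern ((1/2) ^ k) x y := by
  obtain ⟨k, hk1, hk2⟩ := exists_nat_pow_near_of_lt_one (x := 1 - s) (y := (1/2 : ℝ)) (by linarith)
    (by linarith) (by norm_num) (by norm_num)
  refine ⟨k, fun y => ?_⟩
  set T := (1/2 : ℝ) ^ k with hT
  have hT0 : 0 < T := by positivity
  rw [pow_succ, ← hT] at hk1
  have hw : ‖(s : ℂ) * eC x‖ = s := by
    rw [norm_mul, eC_norm, Complex.norm_real, Real.norm_of_nonneg hs, mul_one]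
  unfold kern poissonKernel
  simp only [sub_zero, hw, eC_norm]
  set b := ‖eC y - (s : ℂ) * eC x‖ with hb
  have h2 : 1 - s ≤ b := by
    have := norm_sub_norm_le (eC y) ((s : ℂ) * eC x)
    rw [hw, eC_norm] at this
    linarith
  have h1 : ‖eC x - eC y‖ ≤ b + (1 - s) := by
    have : eC x - eC y = -(eC y - (s : ℂ) * eC x) + ((1 - s : ℝ) : ℂ) * eC x := by push_cast; ring
    rw [this]
    refine (norm_add_le _ _).trans ?_
    rw [norm_neg, norm_mul, eC_norm, Complex.norm_real, Real.norm_of_nonneg (by linarith), mul_one]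
  have hb0 : 0 < b := by linarith
  rw [← mul_div_assoc, div_le_div_iff₀ (by positivity) (by positivity)]
  have h3 : T ^ 2 + ‖eC x - eC y‖ ^ 2 ≤ 8 * b ^ 2 := by
    have : T ≤ 2 * b := by linarith
    have : ‖eC x - eC y‖ ≤ 2 * b := by linarith
    nlinarith [norm_nonneg (eC x - eC y)]
  have h4 : 1 ^ 2 - s ^ 2 ≤ 2 * T := by nlinarith
  have h5 : 0 ≤ 1 ^ 2 - s ^ 2 := by nlinarith
  nlinarith [mul_le_mul h4 h3 (by positivity) (by positivity)]

theorem poisson_le_kern_zero {w : ℂ} {c : ℝ} (hc : 0 < c) (hw : ‖w‖ ≤ 1 - c) (x y) :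
    poissonKernel 0 w (eC y) ≤ (5 / c ^ 2) * kern ((1/2) ^ 0) x y := by
  unfold kern poissonKernel
  simp only [sub_zero, eC_norm, pow_zero]
  have h1 : c ≤ ‖eC y - w‖ := by
    have := norm_sub_norm_le (eC y) w
    rw [eC_norm] at this
    linarith
  have h2 : ‖eC x - eC y‖ ≤ 2 := by
    refine (norm_sub_le _ _).trans ?_
    rw [eC_norm, eC_norm]; norm_num
  have h3 : (1:ℝ) ≤ 5 * (1 / (1 ^ 2 + ‖eC x - eC y‖ ^ 2)) := by
    rw [← mul_div_assoc, le_div_iff₀ (by positivity)]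
    nlinarith [norm_nonneg (eC x - eC y)]
  calc _ ≤ 1 / c ^ 2 := by
        gcongr
        nlinarith [sq_nonneg ‖w‖]
    _ = 1 / c ^ 2 * 1 := by ring
    _ ≤ 1 / c ^ 2 * (5 * (1 / (1 ^ 2 + ‖eC x - eC y‖ ^ 2))) := by gcongr
    _ = _ := by ring


/-- Kernel family. -/
def pk (k : ℕ) (x y : UnitAddCircle) : ℝ≥0∞ := ENNReal.ofReal (kern ((1/2) ^ k) x y)

theorem pk_meas (k : ℕ) : Measurable (Function.uncurry (pk k)) :=
  (kern_cont (t := (1/2) ^ k) (by positivity)).measurable.ennreal_ofReal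

theorem pk_meas1 (k : ℕ) (x) : Measurable (fun y => pk k x y) := by
  have h : Continuous (fun y : UnitAddCircle => kern ((1/2) ^ k) x y) := by
    have := kern_cont (t := (1/2) ^ k) (by positivity)
    fun_prop
  exact h.measurable.ennreal_ofReal

theorem pk_int (k : ℕ) (x) : ∫⁻ y, pk k x y ≤ 2 :=
  kern_int (by positivity) (pow_le_one₀ (by norm_num) (by norm_num)) x

theorem pk_prod (k l : ℕ) (x z y) :
    pk k x y * pk l z y ≤ (4 * pk k x z) * pk l z y + (4 * pk l z x) * pk k x y := by
  have hk : (0:ℝ) < (1/2) ^ k := by positivity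
  have hl : (0:ℝ) < (1/2) ^ l := by positivity
  have n1 := kern_nonneg hk x y
  have n2 := kern_nonneg hl z y
  have n3 := kern_nonneg hk x z
  have n4 := kern_nonneg hl z x
  unfold pk
  have := ENNReal.ofReal_le_ofReal (kern_prod hk hl x z y)
  rw [ENNReal.ofReal_mul n1, ENNReal.ofReal_mul (by norm_num), ENNReal.ofReal_add (by positivity)
    (by positivity), ENNReal.ofReal_mul n3, ENNReal.ofReal_mul n4] at this
  refine this.trans (le_of_eq ?_)
  simp only [ENNReal.ofReal_ofNat]
  ring

theorem pk_le (C : ℝ) (hC : 0 ≤ C) (k : ℕ) (x y) (r : ℝ) (h : r ≤ C * kern ((1/2) ^ k) x y) :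
    ENNReal.ofReal r ≤ ENNReal.ofReal C * pk k x y := by
  unfold pk
  rw [← ENNReal.ofReal_mul hC]
  exact ENNReal.ofReal_le_ofReal h

theorem pk_bdd (k : ℕ) : ∃ b : ℝ≥0∞, b ≠ ⊤ ∧ ∀ x y, pk k x y ≤ b :=
  ⟨ENNReal.ofReal (1 / (1/2) ^ k), by finiteness, fun x y =>
      ENNReal.ofReal_le_ofReal (kern_bdd (by positivity) x y)⟩

attribute [irreducible] pk

theorem pk_pp (k l : ℕ) (x z) : ∫⁻ y, pk k x y * pk l z y ≤ 8 * (pk k x z + pk l z x) := by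
  calc ∫⁻ y, pk k x y * pk l z y 
      ≤ ∫⁻ y, ((4 * pk k x z) * pk l z y + (4 * pk l z x) * pk k x y) :=
        lintegral_mono fun y => pk_prod k l x z y
    _ = (4 * pk k x z) * (∫⁻ y, pk l z y) + (4 * pk l z x) * ∫⁻ y, pk k x y := by
        rw [lintegral_add_left ((pk_meas1 l z).const_mul _), lintegral_const_mul _ (pk_meas1 l z),
          lintegral_const_mul _ (pk_meas1 k x)]
    _ ≤ (4 * pk k x z) * 2 + (4 * pk l z x) * 2 := by gcongr <;> apply pk_int
    _ = _ := by ring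

/-- Maximal operator in the `i`-th coordinate. -/
def Mi {n : ℕ} (i : Fin n) (g : (Fin n → UnitAddCircle) → ℝ≥0∞) (x : Fin n → UnitAddCircle) : ℝ≥0∞ :=
  ⨆ k, ∫⁻ y, pk k (x i) y * g (Function.update x i y)

theorem Mi_meas {n : ℕ} (i : Fin n) {g : (Fin n → UnitAddCircle) → ℝ≥0∞} (hg : Measurable g) :
    Measurable (Mi i g) := by
  unfold Mi
  refine Measurable.iSup fun k => ?_
  refine Measurable.lintegral_prod_right'
    (f := fun q : (Fin n → UnitAddCircle) × UnitAddCircle => pk k (q.1 i) q.2 * g (Function.update q.1 i q.2)) ?_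
  refine Measurable.mul ?_ (hg.comp measurable_update')
  have h1 : Measurable (fun q : (Fin n → UnitAddCircle) × UnitAddCircle => (q.1 i, q.2)) :=
    ((measurable_pi_apply i).comp measurable_fst).prodMk measurable_snd
  exact (pk_meas k).comp h1

theorem Mi_bound {n : ℕ} (i : Fin n) {g : (Fin n → UnitAddCircle) → ℝ≥0∞} (hg : Measurable g) :
    ∫⁻ x, Mi i g x ^ 2 ≤ 256 * ∫⁻ x, g x ^ 2 := by
  rw [← lintegral_const_mul _ (hg.pow_const 2)]
  rw [volume_pi]
  refine lintegral_le_of_lmarginal_le {i} ((Mi_meas i hg).pow_const 2)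
    ((hg.pow_const 2).const_mul _) ?_
  rw [lmarginal_singleton, lmarginal_singleton]
  intro x
  have hm : Measurable (fun y => g (Function.update x i y)) := hg.comp (measurable_update x)
  have := max_bound (volume : Measure UnitAddCircle) pk pk_meas 8 (by norm_num)
    pk_bdd pk_pp
    (fun y => g (Function.update x i y)) hm
  dsimp only
  rw [lintegral_const_mul _ (hm.pow_const 2)]
  simp only [Mi, Function.update_self, Function.update_idem]
  refine this.trans (le_of_eq ?_)
  norm_num

theorem strong {n : ℕ} (F : (Fin n → ℂ) → ℂ)
    (hFc : ContinuousOn F {z | ∀ j, ‖z j‖ ≤ 1})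
    (hFd : ∀ z : Fin n → ℂ, (∀ j, ‖z j‖ ≤ 1) → ∀ i,
      DiffContOnCl ℂ (fun ξ => F (Function.update z i ξ)) (ball 0 1)) (S : Finset (Fin n)) :
    ∃ G : (Fin n → UnitAddCircle) → ℝ≥0∞, Measurable G ∧
      ∫⁻ x, G x ^ 2 ≤ 256 ^ S.card * ∫⁻ x : Fin n → UnitAddCircle, ‖F (fun i => eC (x i))‖ₑ ^ 2 ∧
      ∀ (C : ℝ), 0 ≤ C → ∀ (η : Fin n → UnitAddCircle) (w : Fin n → ℂ), (∀ i, ‖w i‖ < 1) →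
        (∀ i ∈ S, ∃ k : ℕ, ∀ y, poissonKernel 0 (w i) (eC y) ≤ C * kern ((1/2) ^ k) (η i) y) →
        ‖F (fun i => if i ∈ S then w i else eC (η i))‖ₑ ≤ ENNReal.ofReal C ^ S.card * G η := by
  classical
  induction S using Finset.induction_on with
  | empty =>
    refine ⟨fun x => ‖F (fun i => eC (x i))‖ₑ, ?_, by simp, by simp⟩
    have : Continuous (fun x : Fin n → UnitAddCircle => F (fun i => eC (x i))) := by
      refine hFc.comp_continuous (by have := eC_cont; fun_prop) fun x => ?_
      intro j; exact (eC_norm _).le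
    exact this.enorm.measurable
  | insert i S hi ih =>
    obtain ⟨G, hG, hG2, hGp⟩ := ih
    refine ⟨Mi i G, Mi_meas i hG, ?_, ?_⟩
    · rw [Finset.card_insert_of_notMem hi, pow_succ]
      calc _ ≤ _ := Mi_bound i hG
        _ ≤ 256 * (256 ^ S.card * ∫⁻ x : Fin n → UnitAddCircle, ‖F (fun i => eC (x i))‖ₑ ^ 2) := by gcongr
        _ = _ := by ring
    · intro C hC η w hw hk
      obtain ⟨k, hki⟩ := hk i (Finset.mem_insert_self i S)
      have hz : ∀ j, ‖(fun i => if i ∈ S then w i else eC (η i)) j‖ ≤ 1 := by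
        intro j; dsimp only; split_ifs
        · exact (hw j).le
        · exact (eC_norm _).le
      have e1 : (fun j => if j ∈ insert i S then w j else eC (η j)) =
          Function.update (fun j => if j ∈ S then w j else eC (η j)) i (w i) := by
        ext j
        by_cases hj : j = i
        · subst hj; simp
        · simp [hj]
      rw [e1]
      refine (poisson_le (hFd _ hz i) (hw i)).trans ?_
      have h3 : ∀ y, ENNReal.ofReal (poissonKernel 0 (w i) (eC y)) *
          ‖F (Function.update (fun j => if j ∈ S then w j else eC (η j)) i (eC y))‖ₑ ≤
          ENNReal.ofReal C ^ (S.card + 1) * (pk k (η i) y * G (Function.update η i y)) := by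
        intro y
        have a1 : ENNReal.ofReal (poissonKernel 0 (w i) (eC y)) ≤ ENNReal.ofReal C * pk k (η i) y :=
          pk_le C hC k _ _ _ (hki y)
        have a2 : ‖F (Function.update (fun j => if j ∈ S then w j else eC (η j)) i (eC y))‖ₑ ≤
            ENNReal.ofReal C ^ S.card * G (Function.update η i y) := by
          have e3 : Function.update (fun j => if j ∈ S then w j else eC (η j)) i (eC y) =
            (fun j => if j ∈ S then w j else eC (Function.update η i y j)) := by
            ext j
            by_cases hj : j = i
            · subst hj; simp [hi]
            · simp [Function.update_of_ne hj]
          rw [e3]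
          refine hGp C hC _ w hw fun j hj => ?_
          have hji : j ≠ i := fun h => hi (h ▸ hj)
          rw [Function.update_of_ne hji]
          exact hk j (Finset.mem_insert_of_mem hj)
        calc _ ≤ (ENNReal.ofReal C * pk k (η i) y) * (ENNReal.ofReal C ^ S.card * G (Function.update η i y)) := by gcongr
          _ = _ := by ring
      refine (lintegral_mono h3).trans ?_
      rw [Finset.card_insert_of_notMem hi, lintegral_const_mul']
      · gcongr
        exact le_iSup (fun k => ∫⁻ y, pk k (η i) y * G (Function.update η i y)) k
      · finiteness

/-- The polar parametrization. -/
def zz (n : ℕ) (r : ℝ) (θ : Fin n → ℝ) : Fin n → ℂ :=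
  fun j => (r : ℂ) * Complex.exp (2 * Real.pi * Complex.I * (θ j : ℂ))

theorem torus_lint {n : ℕ} (c : Fin n → ℝ) {G : (Fin n → UnitAddCircle) → ℝ≥0∞} (hG : Measurable G) :
    ∫⁻ θ in Set.univ.pi (fun i : Fin n => Set.Ioc (c i) (c i + 1)), G (fun i => (θ i : UnitAddCircle))
      = ∫⁻ x, G x := by
  have h := measurePreserving_pi (fun i : Fin n => (volume : Measure ℝ).restrict (Ioc (c i) (c i + 1)))
    (fun _ => (volume : Measure UnitAddCircle)) (fun i => UnitAddCircle.measurePreserving_mk (c i))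
  rw [volume_pi, volume_pi, Measure.restrict_pi_pi]
  exact h.lintegral_comp hG

theorem eC_exp (r : ℝ) (θ : ℝ) : (r : ℂ) * Complex.exp (2 * Real.pi * Complex.I * (θ : ℂ)) =
    r * eC (θ : UnitAddCircle) := by rw [eC_mk]

theorem scaled_cont {n : ℕ} {f : (Fin n → ℂ) → ℂ} (hf : DifferentiableOn ℂ f (polydisc n)) {ρ : ℝ}
    (hρ : ρ ∈ Ioo (0:ℝ) 1) : ContinuousOn (fun z : Fin n → ℂ => f (fun j => (ρ : ℂ) * z j))
      {z | ∀ j, ‖z j‖ ≤ 1} := by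
  refine hf.continuousOn.comp (by fun_prop) ?_
  intro z hz j
  rw [norm_mul, Complex.norm_real, Real.norm_of_nonneg hρ.1.le]
  exact lt_of_le_of_lt (mul_le_of_le_one_right hρ.1.le (hz j)) hρ.2

theorem polydisc_open (n : ℕ) : IsOpen (polydisc n) := by
  have : polydisc n = ⋂ j, {z | ‖z j‖ < 1} := by ext; simp [polydisc]
  rw [this]
  exact isOpen_iInter_of_finite fun j => isOpen_lt (by fun_prop) continuous_const

theorem scaled_diff {n : ℕ} {f : (Fin n → ℂ) → ℂ} (hf : DifferentiableOn ℂ f (polydisc n)) {ρ : ℝ}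
    (hρ : ρ ∈ Ioo (0:ℝ) 1) (z : Fin n → ℂ) (hz : ∀ j, ‖z j‖ ≤ 1) (i : Fin n) :
    DiffContOnCl ℂ (fun ξ => (fun z : Fin n → ℂ => f (fun j => (ρ : ℂ) * z j)) (Function.update z i ξ))
      (ball 0 1) := by
  have hmem : ∀ ξ : ℂ, ‖ξ‖ ≤ 1 → ∀ j, ‖Function.update z i ξ j‖ ≤ 1 := by
    intro ξ hξ j
    by_cases hj : j = i
    · subst hj; simpa using hξ
    · simpa [hj] using hz j
  have hup : Differentiable ℂ (fun ξ : ℂ => fun j => (ρ : ℂ) * Function.update z i ξ j) := by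
    rw [differentiable_pi]
    intro j
    by_cases hj : j = i
    · subst hj; simp only [Function.update_self]; fun_prop
    · simp only [Function.update_of_ne hj]; fun_prop
  refine ⟨?_, ?_⟩
  · refine hf.comp hup.differentiableOn ?_
    intro ξ hξ j
    rw [norm_mul, Complex.norm_real, Real.norm_of_nonneg hρ.1.le]
    exact lt_of_le_of_lt (mul_le_of_le_one_right hρ.1.le (hmem ξ (by simpa using (mem_ball_zero_iff.1 hξ).le) j)) hρ.2
  · refine hf.continuousOn.comp hup.continuous.continuousOn ?_
    intro ξ hξ j
    rw [closure_ball _ one_ne_zero, mem_closedBall_zero_iff] at hξ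
    rw [norm_mul, Complex.norm_real, Real.norm_of_nonneg hρ.1.le]
    exact lt_of_le_of_lt (mul_le_of_le_one_right hρ.1.le (hmem ξ hξ j)) hρ.2

theorem hardy_torus {n : ℕ} {f : (Fin n → ℂ) → ℂ} (hf : DifferentiableOn ℂ f (polydisc n)) {ρ : ℝ}
    (hρ : ρ ∈ Ioo (0:ℝ) 1) :
    ∫⁻ x : Fin n → UnitAddCircle, ‖f (fun j => (ρ : ℂ) * eC (x j))‖ₑ ^ 2 ≤ hardySq n f := by
  have hm : Measurable (fun x : Fin n → UnitAddCircle => ‖f (fun j => (ρ : ℂ) * eC (x j))‖ₑ ^ 2) := by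
    have : Continuous (fun x : Fin n → UnitAddCircle => f (fun j => (ρ : ℂ) * eC (x j))) := by
      refine (scaled_cont hf hρ).comp_continuous (f := fun (x : Fin n → UnitAddCircle) j => eC (x j))
        (by have := eC_cont; fun_prop) fun x => ?_
      intro j; exact (eC_norm _).le
    exact this.enorm.measurable.pow_const 2
  rw [← torus_lint (fun _ => 0) hm]
  refine le_trans ?_ (le_iSup₂ (f := fun (r : ℝ) (_ : r ∈ Set.Ioo (0:ℝ) 1) => 
    ∫⁻ θ in Set.univ.pi (fun _ : Fin n => Set.Icc (0:ℝ) 1),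
      ENNReal.ofReal
        (‖f (fun j => (r : ℂ) * Complex.exp (2 * Real.pi * Complex.I * (θ j : ℂ)))‖ ^ 2)) ρ hρ)
  refine (lintegral_mono_set (t := Set.univ.pi (fun _ : Fin n => Set.Icc (0:ℝ) 1)) ?_).trans
    (le_of_eq (lintegral_congr fun θ => ?_))
  · refine Set.pi_mono fun i _ => ?_
    rw [zero_add]; exact Ioc_subset_Icc_self
  · simp only [eC_exp]
    rw [ENNReal.ofReal_pow (norm_nonneg _), ofReal_norm]

theorem strong' {n : ℕ} {f : (Fin n → ℂ) → ℂ} (hf : DifferentiableOn ℂ f (polydisc n)) {ρ : ℝ}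
    (hρ : ρ ∈ Ioo (0:ℝ) 1) :
    ∃ G : (Fin n → UnitAddCircle) → ℝ≥0∞, Measurable G ∧ ∫⁻ x, G x ^ 2 ≤ 256 ^ n * hardySq n f ∧
      ∀ (C : ℝ), 0 ≤ C → ∀ (η : Fin n → UnitAddCircle) (w : Fin n → ℂ), (∀ i, ‖w i‖ < 1) →
        (∀ i, ∃ k : ℕ, ∀ y, poissonKernel 0 (w i) (eC y) ≤ C * kern ((1/2) ^ k) (η i) y) →
        ‖f (fun i => (ρ : ℂ) * w i)‖ₑ ≤ ENNReal.ofReal C ^ n * G η := by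
  obtain ⟨G, hG, hG2, hGp⟩ := strong (fun z : Fin n → ℂ => f (fun j => (ρ : ℂ) * z j))
    (scaled_cont hf hρ) (scaled_diff hf hρ) Finset.univ
  refine ⟨G, hG, ?_, ?_⟩
  · refine hG2.trans ?_
    rw [Finset.card_univ, Fintype.card_fin]
    gcongr
    exact hardy_torus hf hρ
  · intro C hC η w hw hk
    have := hGp C hC η w hw (fun i _ => hk i)
    simpa using this

/-- Local data at a point. -/
def LocalData (n : ℕ) (Φ : (Fin n → ℂ) → (Fin n → ℂ)) (r₀ : ℝ) (θ₀ : Fin n → ℝ) : Prop :=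
  ∃ ε > (0:ℝ), ∃ C ≥ (0:ℝ), ∃ d > (0:ℝ), ∃ c : Fin n → ℝ, ∃ Θ : ℝ → (Fin n → ℝ) → (Fin n → ℝ),
    ∃ Θ' : ℝ → (Fin n → ℝ) → ((Fin n → ℝ) →L[ℝ] (Fin n → ℝ)),
    ∀ r ∈ Ioo (0:ℝ) 1, |r - r₀| < ε → InjOn (Θ r) (ball θ₀ ε) ∧ ∀ θ ∈ ball θ₀ ε,
      HasFDerivAt (Θ r) (Θ' r θ) θ ∧ d ≤ |(Θ' r θ).det| ∧ (∀ i, Θ r θ i ∈ Ioc (c i) (c i + 1)) ∧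
      ∀ i, ∃ k : ℕ, ∀ y, poissonKernel 0 (Φ (zz n r θ) i) (eC y) ≤
        C * kern ((1/2) ^ k) (Θ r θ i : UnitAddCircle) y

theorem zz_mem {n : ℕ} {r : ℝ} (hr : r ∈ Ioo (0:ℝ) 1) (θ : Fin n → ℝ) : zz n r θ ∈ polydisc n := by
  intro j
  simp only [zz, eC_exp, norm_mul, eC_norm, Complex.norm_real, Real.norm_of_nonneg hr.1.le]
  linarith [hr.2]

theorem local_bound {n : ℕ} {Φ : (Fin n → ℂ) → (Fin n → ℂ)}
    (hmap : ∀ z ∈ polydisc n, Φ z ∈ polydisc n) {r₀ : ℝ} {θ₀ : Fin n → ℝ} (h : LocalData n Φ r₀ θ₀) :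
    ∃ ε > (0:ℝ), ∃ K : ℝ≥0∞, K ≠ ⊤ ∧ ∀ r ∈ Ioo (0:ℝ) 1, |r - r₀| < ε →
      ∀ f : (Fin n → ℂ) → ℂ, DifferentiableOn ℂ f (polydisc n) → ∀ ρ ∈ Ioo (0:ℝ) 1,
      ∫⁻ θ in ball θ₀ ε, ‖f (fun j => (ρ : ℂ) * Φ (zz n r θ) j)‖ₑ ^ 2 ≤ K * hardySq n f := by
  obtain ⟨ε, hε, C, hC, d, hd, c, Θ, Θ', H⟩ := h
  refine ⟨ε, hε, (ENNReal.ofReal C ^ n) ^ 2 * (ENNReal.ofReal d)⁻¹ * 256 ^ n, ?_, ?_⟩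
  · have : (ENNReal.ofReal d)⁻¹ ≠ ⊤ := by simpa using hd
    finiteness
  intro r hr hrr f hf ρ hρ
  obtain ⟨hinj, H⟩ := H r hr hrr
  obtain ⟨G, hG, hG2, hGp⟩ := strong' hf hρ
  have hG2m : Measurable (fun x => G x ^ 2) := hG.pow_const 2
  set Gm : (Fin n → ℝ) → ℝ≥0∞ := fun u => G (fun i => (u i : UnitAddCircle)) ^ 2 with hGm
  have hd0 : ENNReal.ofReal d ≠ 0 := by simpa using hd
  have e1 : ∫⁻ θ in ball θ₀ ε, ENNReal.ofReal |(Θ' r θ).det| * Gm (Θ r θ) ≤ ∫⁻ x, G x ^ 2 := by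
    rw [← lintegral_image_eq_lintegral_abs_det_fderiv_mul volume measurableSet_ball
      (fun x hx => (H x hx).1.hasFDerivWithinAt) hinj, ← torus_lint c hG2m]
    refine lintegral_mono_set ?_
    rintro _ ⟨θ, hθ, rfl⟩ i _
    exact (H θ hθ).2.2.1 i
  calc _ ≤ ∫⁻ θ in ball θ₀ ε, ((ENNReal.ofReal C ^ n) ^ 2 * (ENNReal.ofReal d)⁻¹) *
          (ENNReal.ofReal |(Θ' r θ).det| * Gm (Θ r θ)) := by
        refine setLIntegral_mono' measurableSet_ball fun θ hθ => ?_
        obtain ⟨-, h2, -, h4⟩ := H θ hθ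
        have := hGp C hC (fun i => (Θ r θ i : UnitAddCircle)) (Φ (zz n r θ))
          (hmap _ (zz_mem hr θ)) h4
        calc _ ≤ (ENNReal.ofReal C ^ n * G (fun i => (Θ r θ i : UnitAddCircle))) ^ 2 := by gcongr
          _ = (ENNReal.ofReal C ^ n) ^ 2 * 1 * Gm (Θ r θ) := by rw [hGm]; ring
          _ = (ENNReal.ofReal C ^ n) ^ 2 * ((ENNReal.ofReal d)⁻¹ * ENNReal.ofReal d) * Gm (Θ r θ) := by
              rw [ENNReal.inv_mul_cancel hd0 (by finiteness)]
          _ ≤ (ENNReal.ofReal C ^ n) ^ 2 * ((ENNReal.ofReal d)⁻¹ * ENNReal.ofReal |(Θ' r θ).det|) * Gm (Θ r θ) := by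
              gcongr
          _ = _ := by ring
    _ = ((ENNReal.ofReal C ^ n) ^ 2 * (ENNReal.ofReal d)⁻¹) *
          ∫⁻ θ in ball θ₀ ε, (ENNReal.ofReal |(Θ' r θ).det| * Gm (Θ r θ)) := by
        rw [lintegral_const_mul']
        have : (ENNReal.ofReal d)⁻¹ ≠ ⊤ := by simpa using hd
        finiteness
    _ ≤ ((ENNReal.ofReal C ^ n) ^ 2 * (ENNReal.ofReal d)⁻¹) * (256 ^ n * hardySq n f) := by
        gcongr; exact e1.trans hG2
    _ = _ := by ring

theorem global_bound {n : ℕ} {Φ : (Fin n → ℂ) → (Fin n → ℂ)}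
    (hmap : ∀ z ∈ polydisc n, Φ z ∈ polydisc n)
    (h : ∀ r₀ ∈ Icc (0:ℝ) 1, ∀ θ₀, LocalData n Φ r₀ θ₀) :
    ∃ K : ℝ≥0∞, K ≠ ⊤ ∧ ∀ r ∈ Ioo (0:ℝ) 1,
      ∀ f : (Fin n → ℂ) → ℂ, DifferentiableOn ℂ f (polydisc n) → ∀ ρ ∈ Ioo (0:ℝ) 1,
      ∫⁻ θ in Set.univ.pi (fun _ : Fin n => Set.Icc (0:ℝ) 1),
        ‖f (fun j => (ρ : ℂ) * Φ (zz n r θ) j)‖ₑ ^ 2 ≤ K * hardySq n f := by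
  have hcomp : IsCompact (Icc (0:ℝ) 1 ×ˢ Set.univ.pi (fun _ : Fin n => Set.Icc (0:ℝ) 1)) :=
    isCompact_Icc.prod (isCompact_univ_pi fun _ => isCompact_Icc)
  have := hcomp.induction_on (p := fun s => ∃ K : ℝ≥0∞, K ≠ ⊤ ∧ ∀ r ∈ Ioo (0:ℝ) 1,
      ∀ f : (Fin n → ℂ) → ℂ, DifferentiableOn ℂ f (polydisc n) → ∀ ρ ∈ Ioo (0:ℝ) 1,
      ∫⁻ θ in {θ | (r, θ) ∈ s},
        ‖f (fun j => (ρ : ℂ) * Φ (zz n r θ) j)‖ₑ ^ 2 ≤ K * hardySq n f) ?_ ?_ ?_ ?_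
  · obtain ⟨K, hK, H⟩ := this
    refine ⟨K, hK, fun r hr f hf ρ hρ => (lintegral_mono_set ?_).trans (H r hr f hf ρ hρ)⟩
    intro θ hθ
    exact ⟨⟨hr.1.le, hr.2.le⟩, hθ⟩
  · exact ⟨0, by simp, by simp⟩
  · rintro s t hst ⟨K, hK, H⟩
    refine ⟨K, hK, fun r hr f hf ρ hρ => le_trans (lintegral_mono_set ?_) (H r hr f hf ρ hρ)⟩
    intro θ hθ
    exact hst hθ
  · rintro s t ⟨K, hK, H⟩ ⟨K', hK', H'⟩
    refine ⟨K + K', by finiteness, fun r hr f hf ρ hρ => ?_⟩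
    rw [add_mul]
    refine le_trans ?_ (add_le_add (H r hr f hf ρ hρ) (H' r hr f hf ρ hρ))
    exact lintegral_union_le _ _ _
  · rintro ⟨r₀, θ₀⟩ ⟨hr₀, -⟩
    obtain ⟨ε, hε, K, hK, H⟩ := local_bound hmap (h r₀ hr₀ θ₀)
    refine ⟨ball (r₀, θ₀) ε, mem_nhdsWithin_of_mem_nhds (ball_mem_nhds _ hε), K, hK, ?_⟩
    intro r hr f hf ρ hρ
    by_cases hrr : |r - r₀| < ε
    · refine (lintegral_mono_set ?_).trans (H r hr hrr f hf ρ hρ)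
      intro θ hθ
      simp only [mem_setOf_eq, mem_ball, Prod.dist_eq, max_lt_iff] at hθ
      exact hθ.2
    · have : {θ : Fin n → ℝ | (r, θ) ∈ ball (r₀, θ₀) ε} = ∅ := by
        ext θ
        simp only [mem_setOf_eq, mem_ball, Prod.dist_eq, max_lt_iff, mem_empty_iff_false, iff_false,
          not_and]
        intro h; exact absurd h hrr
      rw [this]; simp

theorem final_of_local {n : ℕ} {Φ : (Fin n → ℂ) → (Fin n → ℂ)}
    (hhol : DifferentiableOn ℂ Φ (polydisc n))
    (hmap : ∀ z ∈ polydisc n, Φ z ∈ polydisc n)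
    (h : ∀ r₀ ∈ Icc (0:ℝ) 1, ∀ θ₀, LocalData n Φ r₀ θ₀) : bddHardy n Φ := by
  obtain ⟨K, hK, H⟩ := global_bound hmap h
  refine ⟨K.toReal + 1, by positivity, fun f hf => ?_⟩
  have hKle : K ≤ ENNReal.ofReal (K.toReal + 1) := by
    rw [← ENNReal.ofReal_toReal hK]
    exact ENNReal.ofReal_le_ofReal (by simp)
  unfold hardySq
  refine iSup₂_le fun r hr => ?_
  refine le_trans ?_ (mul_le_mul_left hKle (hardySq n f))
  set ρ : ℕ → ℝ := fun m => 1 - 1 / ((m : ℝ) + 2) with hρd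
  have hρ : ∀ m, ρ m ∈ Ioo (0:ℝ) 1 := by
    intro m
    have h2 : (0:ℝ) < (m : ℝ) + 2 := by positivity
    have : 1 / ((m : ℝ) + 2) < 1 := by rw [div_lt_one h2]; linarith [(Nat.cast_nonneg m : (0:ℝ) ≤ m)]
    have : 0 < 1 / ((m : ℝ) + 2) := by positivity
    constructor <;> simp only [hρd] <;> linarith
  have hρt : Filter.Tendsto ρ Filter.atTop (nhds 1) := by
    have h1 : Filter.Tendsto (fun m : ℕ => 1 / ((m : ℝ) + 2)) Filter.atTop (nhds 0) := by
      refine tendsto_const_nhds.div_atTop (Filter.tendsto_atTop_add_const_right _ _ tendsto_natCast_atTop_atTop)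
    simpa [hρd] using h1.const_sub 1
  have hzc : Continuous (zz n r) := by unfold zz; fun_prop
  have hΦc : Continuous (fun θ => Φ (zz n r θ)) :=
    hhol.continuousOn.comp_continuous hzc fun θ => zz_mem hr θ
  have hΦm : ∀ θ, Φ (zz n r θ) ∈ polydisc n := fun θ => hmap _ (zz_mem hr θ)
  have key : ∀ θ, ENNReal.ofReal (‖f (Φ (zz n r θ))‖ ^ 2) =
      Filter.liminf (fun m => ‖f (fun j => (ρ m : ℂ) * Φ (zz n r θ) j)‖ₑ ^ 2) Filter.atTop := by
    intro θ
    symm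
    apply Filter.Tendsto.liminf_eq
    rw [ENNReal.ofReal_pow (norm_nonneg _), ofReal_norm]
    have hfc : ContinuousAt f (Φ (zz n r θ)) :=
      hf.continuousOn.continuousAt ((polydisc_open n).mem_nhds (hΦm θ))
    have h1 : Filter.Tendsto (fun m => (fun j => (ρ m : ℂ) * Φ (zz n r θ) j)) Filter.atTop
        (nhds (Φ (zz n r θ))) := by
      rw [tendsto_pi_nhds]
      intro j
      have : Filter.Tendsto (fun m => (ρ m : ℂ)) Filter.atTop (nhds ((1:ℝ) : ℂ)) :=
        (Complex.continuous_ofReal.tendsto 1).comp hρt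
      simpa using this.mul_const (Φ (zz n r θ) j)
    exact ((ENNReal.continuous_pow 2).tendsto _).comp ((hfc.tendsto.comp h1).enorm)
  calc _ = ∫⁻ θ in Set.univ.pi (fun _ : Fin n => Set.Icc (0:ℝ) 1),
        Filter.liminf (fun m => ‖f (fun j => (ρ m : ℂ) * Φ (zz n r θ) j)‖ₑ ^ 2) Filter.atTop :=
        lintegral_congr fun θ => key θ
    _ ≤ Filter.liminf (fun m => ∫⁻ θ in Set.univ.pi (fun _ : Fin n => Set.Icc (0:ℝ) 1),
        ‖f (fun j => (ρ m : ℂ) * Φ (zz n r θ) j)‖ₑ ^ 2) Filter.atTop := by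
        refine lintegral_liminf_le fun m => ?_
        have : Continuous (fun θ => f (fun j => (ρ m : ℂ) * Φ (zz n r θ) j)) :=
          (scaled_cont hf (hρ m)).comp_continuous hΦc fun θ j => (hΦm θ j).le
        exact this.enorm.measurable.pow_const 2
    _ ≤ Filter.liminf (fun _ : ℕ => K * hardySq n f) Filter.atTop :=
        Filter.liminf_le_liminf (Filter.Eventually.of_forall fun m => H r hr f hf (ρ m) (hρ m))
    _ = K * hardySq n f := Filter.liminf_const _


theorem extend_rows {n : ℕ} (m : Fin n → (Fin n → ℝ)) (I : Finset (Fin n))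
    (hm : LinearIndepOn ℝ m (I : Set (Fin n))) :
    ∃ b : Fin n → (Fin n → ℝ), (∀ i ∈ I, b i = m i) ∧ LinearIndependent ℝ b := by
  suffices H : ∀ k : ℕ, ∀ (J : Finset (Fin n)) (m : Fin n → (Fin n → ℝ)), n - J.card = k →
      LinearIndepOn ℝ m (J : Set (Fin n)) →
      ∃ b : Fin n → (Fin n → ℝ), (∀ i ∈ J, b i = m i) ∧ LinearIndependent ℝ b from H _ I m rfl hm
  intro k
  induction k with
  | zero =>
    intro J m hk hm
    have h1 : J.card ≤ n := by simpa using J.card_le_univ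
    have : J = Finset.univ := by
      rw [← Finset.card_eq_iff_eq_univ, Fintype.card_fin]; omega
    subst this
    refine ⟨m, fun _ _ => rfl, ?_⟩
    simpa [linearIndepOn_univ_iff] using hm
  | succ k ih =>
    intro J m hk hm
    obtain ⟨i, hi⟩ : ∃ i, i ∉ J := by
      by_contra! h
      have : J = Finset.univ := by ext; simp [h]
      subst this
      simp at hk
    have hlt : Submodule.span ℝ (m '' (J : Set (Fin n))) < ⊤ := by
      rw [lt_top_iff_ne_top]
      intro h
      have h1 := finrank_span_finset_le_card (R := ℝ) (J.image m)
      rw [Finset.coe_image, Set.finrank, h, finrank_top, Module.finrank_fin_fun] at h1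
      have := Finset.card_image_le (s := J) (f := m)
      omega
    obtain ⟨x, -, hx⟩ := SetLike.exists_of_lt hlt
    have heq : EqOn (Function.update m i x) m (J : Set (Fin n)) := by
      intro j hj
      rw [Function.update_of_ne]
      rintro rfl
      exact hi hj
    obtain ⟨b, hb, hb'⟩ := ih (insert i J) (Function.update m i x)
      (by rw [Finset.card_insert_of_notMem hi]; omega) (by
        rw [Finset.coe_insert, linearIndepOn_insert (by simpa using hi)]
        refine ⟨(linearIndepOn_congr heq).2 hm, ?_⟩
        rw [heq.image_eq, Function.update_self]
        exact hx)
    refine ⟨b, fun j hj => ?_, hb'⟩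
    rw [hb j (Finset.mem_insert_of_mem hj)]
    exact heq hj

theorem rows_indep {n : ℕ} {Φ : (Fin n → ℂ) → (Fin n → ℂ)} (hrank : rankCond n Φ)
    {ζ : Fin n → ℂ} (hζ : ζ ∈ torus n) (I : Finset (Fin n)) (hI : ∀ i ∈ I, ‖Φ ζ i‖ = 1)
    (him : ∀ i ∈ I, ∀ j, ((Φ ζ i)⁻¹ * (ζ j * jacEntry n Φ ζ i j)).im = 0) :
    LinearIndepOn ℝ (fun i j => ((Φ ζ i)⁻¹ * (ζ j * jacEntry n Φ ζ i j)).re) (I : Set (Fin n)) := by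
  rcases I.eq_empty_or_nonempty with rfl | hne
  · simp
  have hr := hrank I hne ζ hζ hI
  have hli : LinearIndependent ℂ (Matrix.of fun (i : I) (j : Fin n) => jacEntry n Φ ζ i j).row := by
    rw [linearIndependent_iff_card_eq_finrank_span, Set.finrank, ← Matrix.rank_eq_finrank_span_row, hr]
    simp
  rw [LinearIndepOn, Fintype.linearIndependent_iff]
  rw [Fintype.linearIndependent_iff] at hli
  intro g hg i
  have := hli (fun i => (g ⟨i.1, i.2⟩ : ℂ) * (Φ ζ i)⁻¹) ?_ ⟨i.1, i.2⟩
  · have h0 : Φ ζ i ≠ 0 := by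
      rw [← norm_ne_zero_iff, hI i i.2]; exact one_ne_zero
    simpa [h0] using this
  · ext j
    have hζj : ζ j ≠ 0 := by rw [← norm_ne_zero_iff, hζ j]; exact one_ne_zero
    have h1 := congrFun hg j
    simp only [Finset.sum_apply, Pi.smul_apply, smul_eq_mul, Pi.zero_apply] at h1 ⊢
    apply mul_left_cancel₀ hζj
    rw [mul_zero, Finset.mul_sum]
    have h2 : ∀ i : I, ζ j * ((g ⟨i.1, i.2⟩ : ℂ) * (Φ ζ i)⁻¹ *
        (Matrix.of fun (i : I) (j : Fin n) => jacEntry n Φ ζ i j).row i j) =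
        ((g ⟨i.1, i.2⟩ * ((Φ ζ i)⁻¹ * (ζ j * jacEntry n Φ ζ i j)).re : ℝ) : ℂ) := by
      intro i
      have : ((Φ ζ i)⁻¹ * (ζ j * jacEntry n Φ ζ i j)) =
        (((Φ ζ i)⁻¹ * (ζ j * jacEntry n Φ ζ i j)).re : ℂ) := by
        apply Complex.ext
        · simp
        · rw [him i i.2 j]; simp
      rw [Complex.ofReal_mul, ← this]
      simp only [Matrix.row, Matrix.of_apply]
      ring
    rw [Finset.sum_congr rfl fun i _ => h2 i, ← Complex.ofReal_sum]
    rw [Complex.ofReal_eq_zero]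
    exact h1

theorem inj_of_rows {n : ℕ} {b : Fin n → (Fin n → ℝ)} (hb : LinearIndependent ℝ b) (v : Fin n → ℝ)
    (h : ∀ i, ∑ j, b i j * v j = 0) : v = 0 := by
  have hu : IsUnit (Matrix.of b) := by
    rw [← Matrix.linearIndependent_rows_iff_isUnit]
    exact hb
  have := Matrix.mulVec_injective_of_isUnit hu
  apply this
  rw [Matrix.mulVec_zero]
  ext i
  exact h i


theorem polydisc_eq (n : ℕ) : polydisc n = ball 0 1 := by
  ext z
  rw [mem_ball_zero_iff, pi_norm_lt_iff one_pos]
  rfl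

theorem closedPolydisc_eq (n : ℕ) : closedPolydisc n = closedBall 0 1 := by
  ext z
  rw [mem_closedBall_zero_iff, pi_norm_le_iff_of_nonneg zero_le_one]
  rfl

theorem closure_polydisc (n : ℕ) : closure (polydisc n) = closedPolydisc n := by
  rw [polydisc_eq, closedPolydisc_eq, closure_ball _ one_ne_zero]

theorem polydisc_sub (n : ℕ) : polydisc n ⊆ closedPolydisc n := fun _ hz j => (hz j).le

theorem uniq_closed (n : ℕ) : UniqueDiffOn ℝ (closedPolydisc n) := by
  rw [closedPolydisc_eq]
  refine uniqueDiffOn_convex (convex_closedBall _ _) ?_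
  refine ⟨0, mem_interior_iff_mem_nhds.2 (closedBall_mem_nhds _ one_pos)⟩

/-- The derivative up to the boundary. -/
def LL (n : ℕ) (Φ : (Fin n → ℂ) → (Fin n → ℂ)) (z : Fin n → ℂ) : (Fin n → ℂ) →L[ℝ] (Fin n → ℂ) :=
  fderivWithin ℝ Φ (closedPolydisc n) z

theorem LL_cont {n : ℕ} {Φ : (Fin n → ℂ) → (Fin n → ℂ)} (hsm : ContDiffOn ℝ 1 Φ (closedPolydisc n)) :
    ContinuousOn (LL n Φ) (closedPolydisc n) :=
  hsm.continuousOn_fderivWithin (uniq_closed n) le_rfl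

theorem LL_within {n : ℕ} {Φ : (Fin n → ℂ) → (Fin n → ℂ)} (hsm : ContDiffOn ℝ 1 Φ (closedPolydisc n))
    {z : Fin n → ℂ} (hz : z ∈ closedPolydisc n) : HasFDerivWithinAt Φ (LL n Φ z) (closedPolydisc n) z :=
  (hsm.differentiableOn one_ne_zero z hz).hasFDerivWithinAt

theorem LL_at {n : ℕ} {Φ : (Fin n → ℂ) → (Fin n → ℂ)} (hsm : ContDiffOn ℝ 1 Φ (closedPolydisc n))
    {z : Fin n → ℂ} (hz : z ∈ polydisc n) : HasFDerivAt Φ (LL n Φ z) z :=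
  (LL_within hsm (polydisc_sub n hz)).hasFDerivAt
    (Filter.mem_of_superset ((polydisc_open n).mem_nhds hz) (polydisc_sub n))

theorem LL_smul {n : ℕ} {Φ : (Fin n → ℂ) → (Fin n → ℂ)} (hhol : DifferentiableOn ℂ Φ (polydisc n))
    (hsm : ContDiffOn ℝ 1 Φ (closedPolydisc n))
    {z : Fin n → ℂ} (hz : z ∈ closedPolydisc n) (c : ℂ) (v : Fin n → ℂ) :
    LL n Φ z (c • v) = c • LL n Φ z v := by
  have h1 : EqOn (fun z => LL n Φ z (c • v)) (fun z => c • LL n Φ z v) (polydisc n) := by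
    intro z hz
    have h2 : HasFDerivAt Φ ((fderiv ℂ Φ z).restrictScalars ℝ) z :=
      ((hhol z hz).differentiableAt ((polydisc_open n).mem_nhds hz)).hasFDerivAt.restrictScalars ℝ
    have h3 := (LL_at hsm hz).unique h2
    simp only [h3]
    simp
  have hc := LL_cont hsm
  exact h1.of_subset_closure (hc.clm_apply continuousOn_const)
    ((hc.clm_apply continuousOn_const).const_smul c) (polydisc_sub n) (closure_polydisc n).ge hz

theorem LL_expand {n : ℕ} {Φ : (Fin n → ℂ) → (Fin n → ℂ)} (hhol : DifferentiableOn ℂ Φ (polydisc n))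
    (hsm : ContDiffOn ℝ 1 Φ (closedPolydisc n))
    {z : Fin n → ℂ} (hz : z ∈ closedPolydisc n) (v : Fin n → ℂ) (i : Fin n) :
    LL n Φ z v i = ∑ j, v j * jacEntry n Φ z i j := by
  have h : v = ∑ j, v j • (Pi.single j (1:ℂ) : Fin n → ℂ) := by
    ext k
    simp [Finset.sum_apply, Pi.single_apply]
  conv_lhs => rw [h]
  rw [map_sum, Finset.sum_apply]
  refine Finset.sum_congr rfl fun j _ => ?_
  rw [LL_smul hhol hsm hz]
  rfl

theorem Phi_le {n : ℕ} {Φ : (Fin n → ℂ) → (Fin n → ℂ)} 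
    (hsm : ContDiffOn ℝ 1 Φ (closedPolydisc n))
    (hmap : ∀ z ∈ polydisc n, Φ z ∈ polydisc n) {z : Fin n → ℂ} (hz : z ∈ closedPolydisc n) :
    Φ z ∈ closedPolydisc n := by
  have h := (hsm.continuousOn.mono (closure_polydisc n).le).image_closure
  rw [closure_polydisc] at h
  have h2 := h ⟨z, hz, rfl⟩
  rw [← closure_polydisc]
  exact closure_mono (by rintro _ ⟨w, hw, rfl⟩; exact hmap w hw) h2

theorem zz_cl {n : ℕ} {r : ℝ} (hr : r ∈ Icc (0:ℝ) 1) (θ : Fin n → ℝ) : zz n r θ ∈ closedPolydisc n := by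
  intro j
  simp only [zz, eC_exp, norm_mul, eC_norm, Complex.norm_real, Real.norm_of_nonneg hr.1]
  linarith [hr.2]

/-- Derivative of the polar parametrization. -/
def DZ {n : ℕ} (z : Fin n → ℂ) : (Fin n → ℝ) →L[ℝ] (Fin n → ℂ) :=
  ContinuousLinearMap.pi fun j => (2 * Real.pi * Complex.I * z j) •
    (Complex.ofRealCLM.comp (ContinuousLinearMap.proj (R := ℝ) (φ := fun _ : Fin n => ℝ) j))

theorem DZ_apply {n : ℕ} (z : Fin n → ℂ) (v : Fin n → ℝ) (j : Fin n) :
    DZ z v j = 2 * Real.pi * Complex.I * z j * v j := rfl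

theorem DZ_cont (n : ℕ) : Continuous (DZ (n := n)) := by
  rw [continuous_clm_apply]
  intro v
  refine continuous_pi fun j => ?_
  simp only [DZ_apply]
  fun_prop

theorem zz_deriv {n : ℕ} (r : ℝ) (θ : Fin n → ℝ) : HasFDerivAt (zz n r) (DZ (zz n r θ)) θ := by
  rw [hasFDerivAt_pi']
  intro j
  have h1 : HasFDerivAt (fun θ : Fin n → ℝ => (θ j : ℂ))
      (Complex.ofRealCLM.comp (ContinuousLinearMap.proj (R := ℝ) (φ := fun _ : Fin n => ℝ) j)) θ :=
    (Complex.ofRealCLM.comp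
      (ContinuousLinearMap.proj (R := ℝ) (φ := fun _ : Fin n => ℝ) j)).hasFDerivAt
  have h2 := ((h1.const_mul (2 * Real.pi * Complex.I)).cexp).const_mul (r : ℂ)
  refine h2.congr_fderiv ?_
  ext v
  simp [DZ, zz]
  ring

theorem tangential {n : ℕ} {Φ : (Fin n → ℂ) → (Fin n → ℂ)}
    (hsm : ContDiffOn ℝ 1 Φ (closedPolydisc n))
    (hmap : ∀ z ∈ polydisc n, Φ z ∈ polydisc n) (θ₀ : Fin n → ℝ) (i : Fin n)
    (hi : ‖Φ (zz n 1 θ₀) i‖ = 1) (v : Fin n → ℝ) :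
    ((Φ (zz n 1 θ₀) i)⁻¹ * LL n Φ (zz n 1 θ₀) (DZ (zz n 1 θ₀) v) i).re = 0 := by
  have hcl : ∀ θ, zz n 1 θ ∈ closedPolydisc n := fun θ => zz_cl (by simp) θ
  have h1 := (LL_within hsm (hcl θ₀)).comp_hasFDerivAt θ₀ (zz_deriv 1 θ₀)
    (Filter.Eventually.of_forall hcl)
  have h2 := (hasFDerivAt_pi'.1 h1 i).norm_sq
  have hmax : IsLocalMax (fun θ => ‖(Φ ∘ zz n 1) θ i‖ ^ 2) θ₀ := by
    refine Filter.Eventually.of_forall fun θ => ?_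
    simp only [Function.comp]
    rw [hi]
    have := Phi_le hsm hmap (hcl θ) i
    gcongr
  have h3 := hmax.hasFDerivAt_eq_zero h2
  have h4 := DFunLike.congr_fun h3 v
  have h5 : (Φ (zz n 1 θ₀) i)⁻¹ = (starRingEnd ℂ) (Φ (zz n 1 θ₀) i) := by
    rw [Complex.inv_def, Complex.normSq_eq_norm_sq, hi]; simp
  rw [h5]
  simp [Complex.inner] at h4 ⊢
  linarith

/-- Angular derivative row. -/
def RowD {n : ℕ} (Φ : (Fin n → ℂ) → (Fin n → ℂ)) (i : Fin n) (z : Fin n → ℂ) : (Fin n → ℝ) →L[ℝ] ℝ :=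
  (1 / (2 * Real.pi)) • Complex.imCLM.comp ((Φ z i)⁻¹ •
    ((ContinuousLinearMap.proj (R := ℝ) (φ := fun _ : Fin n => ℂ) i).comp ((LL n Φ z).comp (DZ z))))

theorem RowD_apply {n : ℕ} (Φ : (Fin n → ℂ) → (Fin n → ℂ)) (i : Fin n) (z : Fin n → ℂ) (v : Fin n → ℝ) :
    RowD Φ i z v = (1 / (2 * Real.pi)) * ((Φ z i)⁻¹ * LL n Φ z (DZ z v) i).im := rfl

theorem RowD_cont {n : ℕ} {Φ : (Fin n → ℂ) → (Fin n → ℂ)}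
    (hsm : ContDiffOn ℝ 1 Φ (closedPolydisc n)) (i : Fin n) (v : Fin n → ℝ) {z₀ : Fin n → ℂ}
    (hz₀ : z₀ ∈ closedPolydisc n) (h0 : Φ z₀ i ≠ 0) :
    ContinuousWithinAt (fun z => RowD Φ i z v) (closedPolydisc n) z₀ := by
  simp only [RowD_apply]
  have h1 : ContinuousWithinAt (fun z => LL n Φ z (DZ z v)) (closedPolydisc n) z₀ :=
    (LL_cont hsm z₀ hz₀).clm_apply
      (((DZ_cont n).clm_apply continuous_const).continuousWithinAt)
  have h2 : ContinuousWithinAt (fun z => LL n Φ z (DZ z v) i) (closedPolydisc n) z₀ :=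
    continuousWithinAt_pi.1 h1 i
  have h3 : ContinuousWithinAt (fun z => Φ z i) (closedPolydisc n) z₀ :=
    continuousWithinAt_pi.1 (hsm.continuousOn z₀ hz₀) i
  exact continuousWithinAt_const.mul
    (Complex.continuous_im.continuousAt.comp_continuousWithinAt ((h3.inv₀ h0).mul h2))

theorem RowD_base {n : ℕ} {Φ : (Fin n → ℂ) → (Fin n → ℂ)} (hhol : DifferentiableOn ℂ Φ (polydisc n))
    (hsm : ContDiffOn ℝ 1 Φ (closedPolydisc n)) (i : Fin n) {z : Fin n → ℂ}
    (hz : z ∈ closedPolydisc n) (v : Fin n → ℝ) :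
    RowD Φ i z v = ∑ j, ((Φ z i)⁻¹ * (z j * jacEntry n Φ z i j)).re * v j := by
  rw [RowD_apply, LL_expand hhol hsm hz, Finset.mul_sum, Complex.im_sum, Finset.mul_sum]
  refine Finset.sum_congr rfl fun j _ => ?_
  rw [DZ_apply]
  have : (Φ z i)⁻¹ * (2 * Real.pi * Complex.I * z j * v j * jacEntry n Φ z i j) =
    ((2 * Real.pi * v j : ℝ) : ℂ) * (Complex.I * ((Φ z i)⁻¹ * (z j * jacEntry n Φ z i j))) := by
    push_cast; ring
  rw [this, Complex.im_ofReal_mul, Complex.I_mul_im]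
  field_simp

theorem row_im_zero {n : ℕ} {Φ : (Fin n → ℂ) → (Fin n → ℂ)} (hhol : DifferentiableOn ℂ Φ (polydisc n))
    (hsm : ContDiffOn ℝ 1 Φ (closedPolydisc n))
    (hmap : ∀ z ∈ polydisc n, Φ z ∈ polydisc n) (θ₀ : Fin n → ℝ) (i : Fin n)
    (hi : ‖Φ (zz n 1 θ₀) i‖ = 1) (j : Fin n) :
    ((Φ (zz n 1 θ₀) i)⁻¹ * ((zz n 1 θ₀) j * jacEntry n Φ (zz n 1 θ₀) i j)).im = 0 := by
  have h := tangential hsm hmap θ₀ i hi (Pi.single j 1)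
  rw [LL_expand hhol hsm (zz_cl (by simp) θ₀), Finset.sum_eq_single j] at h
  · rw [DZ_apply] at h
    have : (Φ (zz n 1 θ₀) i)⁻¹ * (2 * Real.pi * Complex.I * (zz n 1 θ₀) j *
        ((Pi.single j 1 : Fin n → ℝ) j) * jacEntry n Φ (zz n 1 θ₀) i j) =
      ((2 * Real.pi : ℝ) : ℂ) * (Complex.I *
        ((Φ (zz n 1 θ₀) i)⁻¹ * ((zz n 1 θ₀) j * jacEntry n Φ (zz n 1 θ₀) i j))) := by
      simp; ring
    rw [this, Complex.re_ofReal_mul, Complex.I_mul_re] at h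
    have hp := Real.pi_pos
    have := (mul_eq_zero.1 h).resolve_left (by positivity)
    linarith
  · intro k _ hk
    rw [DZ_apply]
    simp [hk]
  · simp

theorem RowD_deriv {n : ℕ} {Φ : (Fin n → ℂ) → (Fin n → ℂ)}
    (hsm : ContDiffOn ℝ 1 Φ (closedPolydisc n)) (i : Fin n) {r : ℝ} {θ : Fin n → ℝ}
    (hz : zz n r θ ∈ polydisc n) (α : ℝ) {a : ℂ} (ha : Φ (zz n r θ) i / a ∈ Complex.slitPlane) :
    HasFDerivAt (fun θ => α + (1 / (2 * Real.pi)) * (Complex.log (Φ (zz n r θ) i / a)).im)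
      (RowD Φ i (zz n r θ)) θ := by
  have h0 : Φ (zz n r θ) i / a ≠ 0 := Complex.slitPlane_ne_zero ha
  have hane : a ≠ 0 := by rintro rfl; simp at h0
  have h1 := hasFDerivAt_pi'.1 ((LL_at hsm hz).comp θ (zz_deriv r θ)) i
  have h2 := (Complex.hasDerivAt_log ha).hasFDerivAt.restrictScalars ℝ
  have h3 : HasFDerivAt (fun x => Φ (zz n r x) i / a) (a⁻¹ • (ContinuousLinearMap.proj i ∘SL
      LL n Φ (zz n r θ) ∘SL DZ (zz n r θ))) θ := by
    simpa [div_eq_mul_inv] using h1.mul_const a⁻¹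
  have h4 := Complex.imCLM.hasFDerivAt.comp θ (h2.comp θ h3)
  have h5 := (h4.const_mul (1 / (2 * Real.pi))).const_add α
  refine h5.congr_fderiv ?_
  ext v
  rw [RowD_apply]
  simp only [smul_apply, smul_eq_mul, ContinuousLinearMap.comp_apply]
  congr 1
  simp only [Complex.imCLM_apply]
  congr 1
  have h6 : Φ (zz n r θ) i ≠ 0 := by rintro h; simp [h] at h0
  simp
  field_simp


theorem angle_repr {w a : ℂ} (ha : ‖a‖ = 1) :
    w = (‖w‖ : ℂ) * eC ((Complex.arg a / (2 * Real.pi) +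
      (1 / (2 * Real.pi)) * (Complex.log (w / a)).im : ℝ) : UnitAddCircle) := by
  have hp : (Real.pi : ℂ) ≠ 0 := by exact_mod_cast Real.pi_ne_zero
  have h1 := Complex.norm_mul_exp_arg_mul_I (w / a)
  have h2 := Complex.norm_mul_exp_arg_mul_I a
  have ha0 : a ≠ 0 := by rw [← norm_ne_zero_iff, ha]; exact one_ne_zero
  rw [norm_div, ha, div_one] at h1
  rw [ha, Complex.ofReal_one, one_mul] at h2
  rw [eC_mk, Complex.log_im]
  have h3 : 2 * (Real.pi : ℂ) * Complex.I * ((Complex.arg a / (2 * Real.pi) +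
      (1 / (2 * Real.pi)) * (w / a).arg : ℝ) : ℂ) =
      (w / a).arg * Complex.I + Complex.arg a * Complex.I := by
    push_cast
    field_simp
    ring
  rw [h3, Complex.exp_add, ← mul_assoc, h1, h2]
  field_simp

theorem frame {n : ℕ} {Φ : (Fin n → ℂ) → (Fin n → ℂ)} (hhol : DifferentiableOn ℂ Φ (polydisc n))
    (hsm : ContDiffOn ℝ 1 Φ (closedPolydisc n))
    (hmap : ∀ z ∈ polydisc n, Φ z ∈ polydisc n) (hrank : rankCond n Φ)
    {r₀ : ℝ} (hr₀ : r₀ ∈ Icc (0:ℝ) 1) (θ₀ : Fin n → ℝ) (I : Finset (Fin n))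
    (hI : ∀ i ∈ I, ‖Φ (zz n r₀ θ₀) i‖ = 1) :
    ∃ b : Fin n → (Fin n → ℝ), LinearIndependent ℝ b ∧
      ∀ i ∈ I, ∀ v, RowD Φ i (zz n r₀ θ₀) v = ∑ j, b i j * v j := by
  rcases hr₀.2.lt_or_eq with h | rfl
  · have hz : zz n r₀ θ₀ ∈ polydisc n := by
      intro j
      simp only [zz, eC_exp, norm_mul, eC_norm, Complex.norm_real, Real.norm_of_nonneg hr₀.1]
      linarith
    have hemp : I = ∅ := by
      rw [Finset.eq_empty_iff_forall_notMem]
      intro i hi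
      have := hmap _ hz i
      rw [hI i hi] at this
      exact lt_irrefl _ this
    subst hemp
    obtain ⟨b, -, hb⟩ := extend_rows (fun _ _ => 0 : Fin n → (Fin n → ℝ)) ∅ (by simp)
    exact ⟨b, hb, by simp⟩
  · have hζ : zz n 1 θ₀ ∈ torus n := by
      intro j
      simp only [zz, eC_exp, norm_mul, eC_norm]
      simp
    obtain ⟨b, hb, hb'⟩ := extend_rows _ I (rows_indep hrank hζ I hI
      fun i hi j => row_im_zero hhol hsm hmap θ₀ i (hI i hi) j)
    refine ⟨b, hb', fun i hi v => ?_⟩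
    rw [RowD_base hhol hsm i (zz_cl hr₀ θ₀), hb i hi]

theorem zz_cont (n : ℕ) : Continuous (fun p : ℝ × (Fin n → ℝ) => zz n p.1 p.2) := by
  unfold zz
  fun_prop

theorem local_data {n : ℕ} {Φ : (Fin n → ℂ) → (Fin n → ℂ)} (hhol : DifferentiableOn ℂ Φ (polydisc n))
    (hsm : ContDiffOn ℝ 1 Φ (closedPolydisc n))
    (hmap : ∀ z ∈ polydisc n, Φ z ∈ polydisc n) (hrank : rankCond n Φ)
    {r₀ : ℝ} (hr₀ : r₀ ∈ Icc (0:ℝ) 1) (θ₀ : Fin n → ℝ) : LocalData n Φ r₀ θ₀ := by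
  classical
  set z₀ := zz n r₀ θ₀ with hz₀def
  have hz₀ : z₀ ∈ closedPolydisc n := zz_cl hr₀ θ₀
  set I : Finset (Fin n) := Finset.univ.filter (fun i => ‖Φ z₀ i‖ = 1) with hIdef
  have hI : ∀ i ∈ I, ‖Φ z₀ i‖ = 1 := fun i hi => (Finset.mem_filter.1 hi).2
  have hI' : ∀ i ∉ I, ‖Φ z₀ i‖ < 1 := fun i hi =>
    lt_of_le_of_ne (Phi_le hsm hmap hz₀ i) fun h => hi (by simp [I, h])
  have hne : ∀ i ∈ I, Φ z₀ i ≠ 0 := fun i hi => by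
    rw [← norm_ne_zero_iff, hI i hi]; exact one_ne_zero
  obtain ⟨b, hb, hbI⟩ := frame hhol hsm hmap hrank hr₀ θ₀ I hI
  let B : (Fin n → ℝ) →L[ℝ] (Fin n → ℝ) := LinearMap.toContinuousLinearMap (Matrix.mulVecLin (Matrix.of b))
  have hB : ∀ v i, B v i = ∑ j, b i j * v j := fun v i => rfl
  have hBinj : LinearMap.ker (B : (Fin n → ℝ) →ₗ[ℝ] (Fin n → ℝ)) = ⊥ := by
    rw [LinearMap.ker_eq_bot']
    intro v hv
    exact inj_of_rows hb v fun i => by rw [← hB]; exact congrFun hv i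
  have hdet : B.det ≠ 0 := by
    intro h
    have := LinearMap.bot_lt_ker_of_det_eq_zero (f := (B : (Fin n → ℝ) →ₗ[ℝ] (Fin n → ℝ))) h
    rw [hBinj] at this
    exact lt_irrefl _ this
  obtain ⟨K, hK, hanti⟩ := LinearMap.exists_antilipschitzWith _ hBinj
  have hK' : (0:ℝ) < K := hK
  let TD : (Fin n → ℂ) → ((Fin n → ℝ) →L[ℝ] (Fin n → ℝ)) := fun z =>
    ContinuousLinearMap.pi fun i => if i ∈ I then RowD Φ i z else
      (ContinuousLinearMap.proj (R := ℝ) (φ := fun _ : Fin n => ℝ) i).comp B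
  have hTD0 : TD z₀ = B := by
    refine ContinuousLinearMap.ext fun v => funext fun i => ?_
    simp only [TD, ContinuousLinearMap.coe_pi']
    split_ifs with hi
    · rw [hbI i hi, hB]
    · rfl
  have hTDc : ContinuousWithinAt TD (closedPolydisc n) z₀ := by
    rw [continuousWithinAt_clm_apply]
    intro v
    rw [continuousWithinAt_pi]
    intro i
    simp only [TD, ContinuousLinearMap.coe_pi']
    by_cases hi : i ∈ I
    · simp only [hi, if_true]
      exact RowD_cont hsm i v hz₀ (hne i hi)
    · simp only [hi, if_false]
      exact continuousWithinAt_const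
  have hΦc : ∀ i, ContinuousWithinAt (fun z => Φ z i) (closedPolydisc n) z₀ :=
    continuousWithinAt_pi.1 (hsm.continuousOn z₀ hz₀)
  have E1 : ∀ᶠ z in nhdsWithin z₀ (closedPolydisc n), ∀ i ∈ I, Φ z i / Φ z₀ i ∈ Complex.slitPlane := by
    rw [Filter.eventually_all_finset]
    intro i hi
    refine ((hΦc i).div_const (Φ z₀ i)).eventually (Complex.isOpen_slitPlane.mem_nhds ?_)
    show Φ z₀ i / Φ z₀ i ∈ _
    rw [div_self (hne i hi)]
    exact Complex.one_mem_slitPlane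
  have E2 : ∀ᶠ z in nhdsWithin z₀ (closedPolydisc n), ‖TD z - B‖ < 1 / (2 * K) := by
    have := (hTDc.sub (continuousWithinAt_const (b := B))).norm
    refine this.eventually (gt_mem_nhds ?_)
    show ‖TD z₀ - B‖ < _
    rw [hTD0, sub_self, norm_zero]
    positivity
  have E3 : ∀ᶠ z in nhdsWithin z₀ (closedPolydisc n), |B.det| / 2 < |(TD z).det| := by
    have := (ContinuousLinearMap.continuous_det.continuousAt.comp_continuousWithinAt hTDc).abs
    refine this.eventually (lt_mem_nhds ?_)
    simp only [Function.comp, hTD0]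
    have := abs_pos.2 hdet
    linarith
  let c' : Fin n → ℝ := fun i => (1 - ‖Φ z₀ i‖) / 2
  have hc' : ∀ i ∉ I, 0 < c' i := fun i hi => by
    have := hI' i hi
    simp only [c']
    linarith
  have E4 : ∀ᶠ z in nhdsWithin z₀ (closedPolydisc n), ∀ i, i ∉ I → ‖Φ z i‖ < 1 - c' i := by
    rw [Filter.eventually_all]
    intro i
    by_cases hi : i ∈ I
    · simp [hi]
    · have : ∀ᶠ z in nhdsWithin z₀ (closedPolydisc n), ‖Φ z i‖ < 1 - c' i := by
        refine (hΦc i).norm.eventually (gt_mem_nhds ?_)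
        have := hI' i hi
        simp only [c']
        linarith
      filter_upwards [this] with z hz _ using hz
  have htend : Filter.Tendsto (fun p : ℝ × (Fin n → ℝ) => zz n p.1 p.2)
      (nhdsWithin (r₀, θ₀) (Icc (0:ℝ) 1 ×ˢ univ)) (nhdsWithin z₀ (closedPolydisc n)) := by
    refine tendsto_nhdsWithin_of_tendsto_nhds_of_eventually_within _ ?_ ?_
    · exact ((zz_cont n).tendsto (r₀, θ₀)).mono_left nhdsWithin_le_nhds
    · filter_upwards [self_mem_nhdsWithin] with p hp using zz_cl hp.1 p.2
  have E5 : ∀ᶠ p : ℝ × (Fin n → ℝ) in nhdsWithin (r₀, θ₀) (Icc (0:ℝ) 1 ×ˢ univ),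
      ‖B p.2 - B θ₀‖ < 1 / 2 := by
    have hc : Continuous (fun p : ℝ × (Fin n → ℝ) => ‖B p.2 - B θ₀‖) := by fun_prop
    refine (hc.continuousWithinAt (x := (r₀, θ₀))).eventually (gt_mem_nhds ?_)
    simp
  have Eall := ((htend.eventually E1).and ((htend.eventually E2).and ((htend.eventually E3).and
    ((htend.eventually E4).and E5))))
  rw [Filter.Eventually, Metric.mem_nhdsWithin_iff] at Eall
  obtain ⟨ε, hε, H⟩ := Eall
  let α : Fin n → ℝ := fun i => Complex.arg (Φ z₀ i) / (2 * Real.pi)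
  let Θ : ℝ → (Fin n → ℝ) → (Fin n → ℝ) := fun r θ i => if i ∈ I then
    α i + (1 / (2 * Real.pi)) * (Complex.log (Φ (zz n r θ) i / Φ z₀ i)).im else B θ i
  refine ⟨ε, hε, 40 + ∑ i, 5 / c' i ^ 2, ?_, |B.det| / 2, ?_, 
    fun i => if i ∈ I then α i - 1 / 2 else B θ₀ i - 1 / 2, Θ, fun r θ => TD (zz n r θ), ?_⟩
  · positivity
  · have := abs_pos.2 hdet
    linarith
  intro r hr hrε
  have H' : ∀ θ ∈ ball θ₀ ε, _ := fun θ hθ => H (show (r, θ) ∈ _ from ⟨by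
    rw [mem_ball, Prod.dist_eq, max_lt_iff]
    exact ⟨by simpa [Real.dist_eq] using hrε, hθ⟩, ⟨⟨hr.1.le, hr.2.le⟩, mem_univ _⟩⟩)
  have hder : ∀ θ ∈ ball θ₀ ε, HasFDerivAt (Θ r) (TD (zz n r θ)) θ := by
    intro θ hθ
    obtain ⟨h1, -⟩ := H' θ hθ
    rw [hasFDerivAt_pi]
    intro i
    by_cases hi : i ∈ I
    · simp only [Θ, hi, if_true]
      exact RowD_deriv hsm i (zz_mem hr θ) (α i) (h1 i hi)
    · simp only [Θ, hi, if_false]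
      exact ((ContinuousLinearMap.proj (R := ℝ) (φ := fun _ : Fin n => ℝ) i).comp B).hasFDerivAt
  refine ⟨?_, fun θ hθ => ⟨hder θ hθ, ?_, ?_, ?_⟩⟩
  · intro x hx y hy hxy
    have h1 := Convex.norm_image_sub_le_of_norm_hasFDerivWithin_le' (f := Θ r) (φ := B)
      (fun θ hθ => (hder θ hθ).hasFDerivWithinAt) (fun θ hθ => (H' θ hθ).2.1.le) (convex_ball θ₀ ε) hx hy
    rw [hxy, sub_self, zero_sub, norm_neg] at h1
    have h2 := hanti.le_mul_dist y x
    rw [dist_eq_norm, dist_eq_norm, ← map_sub] at h2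
    have h3 : ‖y - x‖ ≤ K * (1 / (2 * K) * ‖y - x‖) := h2.trans (by gcongr; exact h1)
    have h4 : (K:ℝ) * (1 / (2 * K) * ‖y - x‖) = ‖y - x‖ / 2 := by field_simp
    have h5 : ‖y - x‖ = 0 := by linarith [norm_nonneg (y - x)]
    exact (sub_eq_zero.1 (norm_eq_zero.1 h5)).symm
  · exact (H' θ hθ).2.2.1.le
  · intro i
    by_cases hi : i ∈ I
    · simp only [Θ, hi, if_true, Complex.log_im]
      have hp := Real.pi_pos
      have h1 := Complex.neg_pi_lt_arg (Φ (zz n r θ) i / Φ z₀ i)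
      have h2 := Complex.arg_le_pi (Φ (zz n r θ) i / Φ z₀ i)
      set t := Complex.arg (Φ (zz n r θ) i / Φ z₀ i)
      have h3 : 1 / (2 * Real.pi) * t = t / Real.pi / 2 := by field_simp
      have h4 : -1 < t / Real.pi := by rw [lt_div_iff₀ hp]; linarith
      have h5 : t / Real.pi ≤ 1 := by rw [div_le_iff₀ hp]; linarith
      rw [h3]
      constructor <;> linarith
    · simp only [Θ, hi, if_false]
      have h1 := (norm_le_pi_norm (B θ - B θ₀) i).trans_lt (H' θ hθ).2.2.2.2
      rw [Real.norm_eq_abs, abs_lt, Pi.sub_apply] at h1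
      constructor <;> linarith
  · intro i
    have hlt := hmap _ (zz_mem hr θ) i
    by_cases hi : i ∈ I
    · have h1 : Φ (zz n r θ) i = (‖Φ (zz n r θ) i‖ : ℂ) * eC ((Θ r θ i : ℝ) : UnitAddCircle) := by
        simp only [Θ, hi, if_true, α]
        exact angle_repr (hI i hi)
      obtain ⟨k, hk⟩ := poisson_le_kern (norm_nonneg _) hlt ((Θ r θ i : ℝ) : UnitAddCircle)
      rw [← h1] at hk
      refine ⟨k, fun y => (hk y).trans ?_⟩
      have := kern_nonneg (show (0:ℝ) < (1/2) ^ k by positivity) ((Θ r θ i : ℝ) : UnitAddCircle) y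
      gcongr
      have : 0 ≤ ∑ i, 5 / c' i ^ 2 := by positivity
      linarith
    · refine ⟨0, fun y => (poisson_le_kern_zero (hc' i hi) ((H' θ hθ).2.2.2.1 i hi).le
        ((Θ r θ i : ℝ) : UnitAddCircle) y).trans ?_⟩
      have := kern_nonneg (show (0:ℝ) < (1/2) ^ 0 by positivity) ((Θ r θ i : ℝ) : UnitAddCircle) y
      gcongr
      have : 5 / c' i ^ 2 ≤ ∑ i, 5 / c' i ^ 2 :=
        Finset.single_le_sum (f := fun i => 5 / c' i ^ 2) (fun i _ => by positivity) (Finset.mem_univ i)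
      linarith

theorem rank_sufficiency_hardy (n : ℕ) (Φ : (Fin n → ℂ) → (Fin n → ℂ))
    (hhol : DifferentiableOn ℂ Φ (polydisc n))
    (hsm : ContDiffOn ℝ 1 Φ (closedPolydisc n))
    (hmap : ∀ z ∈ polydisc n, Φ z ∈ polydisc n)
    (hrank : rankCond n Φ) :
    bddHardy n Φ := by
  exact final_of_local hhol hmap fun r₀ hr₀ θ₀ => local_data hhol hsm hmap hrank hr₀ θ₀

end
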